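/- arXiv:1601.03577 — 2 statements merged into one kernel-verified Lean document; each statement's English description precedes it below -/
import Mathlib

section
/- Let L be a Tonelli Lagrangian on a metric graph G with critical value c. Then c equals the infimum of the set of real numbers k such that A(γ) + k(b − a) ≥ 0 for every closed absolutely continuous curve γ : [a,b] → G (i.e. every absolutely continuous γ with γ(a) = γ(b)). -/
/-!
Only loops matter: the argument uses the defining property of `c` at pairs `(x, x)`.

If `k > c` and a loop `γ` on `[a, b]` had `A(γ) + k(b - a) < 0`, then traversing it `n` times
(`exists_iterate`) gives `h_{n(b-a)}(x,x) + k n (b - a) ≤ n (A(γ) + k(b - a)) ≤ 0` for every `n`,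
contradicting `liminf (h_t(x,x) + kt) = +∞`. The inequality `h_t ≤ A` (`ht_le_action`) requires the
set of actions to be bounded below, which follows from a uniform lower bound for the Lagrangian
(`exists_lower_bound`). Conversely, if `k < c` then `liminf (h_t(x,x) + kt) = -∞`, so
`h_t(x,x) + kt < 0` for some `t ≥ 0`, and since constant curves make the set of actions nonempty,
some loop has negative penalized action. Hence the set of admissible `k` contains `(c, ∞)` and
lies in `[c, ∞)`.

The edgewise derivative at a time depends only on the germ of the curve there and commutes with
time translation (`gderiv_shift`); this alone computes the action of an iterated loop.
-/

open Filter Set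

/-- A compact metric graph: finitely many edges parametrized by arc length,
whose distance is the minimal length of unit-speed paths. -/
structure MetricGraph where
  G : Type
  [ms : MetricSpace G]
  [cs : CompactSpace G]
  E : Type
  [fE : Fintype E]
  [neE : Nonempty E]
  len : E → ℝ
  len_pos : ∀ j, 0 < len j
  σ : E → ℝ → G
  σ_lip : ∀ j, ∀ s ∈ Set.Icc (0:ℝ) (len j), ∀ t ∈ Set.Icc (0:ℝ) (len j),
    dist (σ j s) (σ j t) ≤ |s - t|
  σ_inj : ∀ j, Set.InjOn (σ j) (Set.Icc 0 (len j))
  cover : ∀ x : G, ∃ j, ∃ s ∈ Set.Icc (0:ℝ) (len j), σ j s = x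
  interiors_disjoint : ∀ i j, ∀ s ∈ Set.Ioo (0:ℝ) (len i), ∀ t ∈ Set.Ioo (0:ℝ) (len j),
    σ i s = σ j t → i = j
  path_dist : ∀ x y : G, dist x y =
    sInf {T : ℝ | 0 ≤ T ∧ ∃ γ : ℝ → G, γ 0 = x ∧ γ T = y ∧ LipschitzOnWith 1 γ (Set.Icc 0 T)}
  path_exists : ∀ x y : G, ∃ T : ℝ, 0 ≤ T ∧ ∃ γ : ℝ → G, γ 0 = x ∧ γ T = y ∧
    LipschitzOnWith 1 γ (Set.Icc 0 T)

attribute [instance] MetricGraph.ms MetricGraph.cs MetricGraph.fE MetricGraph.neE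

open MeasureTheory

namespace MetricGraph

/-- The vertex set: endpoints of edges. -/
def vertexSet (Γ : MetricGraph) : Set Γ.G :=
  {x | ∃ j, x = Γ.σ j 0 ∨ x = Γ.σ j (Γ.len j)}

/-- The curve `γ` has (edgewise) derivative `v` at time `t`: either `γ t` is a vertex,
`v = 0` and `d(γ s, γ t) = o(|s-t|)`, or `γ t` lies in the interior of an edge and `v`
is the derivative of the edge coordinate of `γ` at `t`. -/
def HasGDerivAt (Γ : MetricGraph) (γ : ℝ → Γ.G) (t v : ℝ) : Prop :=
  (γ t ∈ Γ.vertexSet ∧ v = 0 ∧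
    ∀ ε : ℝ, 0 < ε → ∃ δ : ℝ, 0 < δ ∧ ∀ s : ℝ, |s - t| < δ → dist (γ s) (γ t) ≤ ε * |s - t|) ∨
  (γ t ∉ Γ.vertexSet ∧ ∃ j : Γ.E, ∃ f : ℝ → ℝ,
    (∀ᶠ s in nhds t, Γ.σ j (f s) = γ s) ∧ (∀ᶠ s in nhds t, f s ∈ Set.Icc 0 (Γ.len j)) ∧
    HasDerivAt f v t)

/-- The (edgewise) derivative of a curve, defined by choice where it exists, `0` elsewhere. -/
noncomputable def gderiv (Γ : MetricGraph) (γ : ℝ → Γ.G) (t : ℝ) : ℝ :=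
  letI := Classical.dec (∃ v, Γ.HasGDerivAt γ t v)
  if h : ∃ v, Γ.HasGDerivAt γ t v then h.choose else 0

/-- Absolute continuity of a curve `γ : [a,b] → G`. -/
def AbsContOn (Γ : MetricGraph) (a b : ℝ) (γ : ℝ → Γ.G) : Prop :=
  ∀ ε : ℝ, 0 < ε → ∃ δ : ℝ, 0 < δ ∧ ∀ n : ℕ, ∀ c d : Fin n → ℝ,
    (∀ i, c i ∈ Set.Icc a b ∧ d i ∈ Set.Icc a b ∧ c i ≤ d i) →
    ((Set.univ : Set (Fin n)).PairwiseDisjoint fun i => Set.Ioo (c i) (d i)) →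
    (∑ i, (d i - c i)) < δ →
    (∑ i, dist (γ (c i)) (γ (d i))) < ε

/-- A function on `G` is `C¹` near a vertex `e` if its pullback to every edge
containing `e` is `C¹` near the coordinate of `e`. -/
def C1AtVertex (Γ : MetricGraph) (ψ : Γ.G → ℝ) (e : Γ.G) : Prop :=
  ∀ j, ∀ s ∈ Set.Icc (0:ℝ) (Γ.len j), Γ.σ j s = e →
    ∃ δ : ℝ, 0 < δ ∧ ContDiffOn ℝ 1 (fun τ => ψ (Γ.σ j τ))
      (Set.Icc 0 (Γ.len j) ∩ Set.Ioo (s - δ) (s + δ))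

/-- A function on `G × ℝ` is `C¹` near `(e, t)` with `e` a vertex. -/
def C1AtVertexT (Γ : MetricGraph) (ψ : Γ.G → ℝ → ℝ) (e : Γ.G) (t : ℝ) : Prop :=
  ∀ j, ∀ s ∈ Set.Icc (0:ℝ) (Γ.len j), Γ.σ j s = e →
    ∃ δ : ℝ, 0 < δ ∧ ContDiffOn ℝ 1 (fun q : ℝ × ℝ => ψ (Γ.σ j q.1) q.2)
      ((Set.Icc 0 (Γ.len j) ∩ Set.Ioo (s - δ) (s + δ)) ×ˢ Set.Ioo (t - δ) (t + δ))

end MetricGraph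

/-- A Tonelli Lagrangian on a metric graph: edgewise `C²`, strictly convex and
superlinear in the velocity, consistent at the vertices. -/
structure TonelliLagrangian (Γ : MetricGraph) where
  L : Γ.E → ℝ → ℝ → ℝ
  smooth : ∀ j, ContDiffOn ℝ 2 (fun p : ℝ × ℝ => L j p.1 p.2)
    (Set.Icc 0 (Γ.len j) ×ˢ (Set.univ : Set ℝ))
  strictconv : ∀ j, ∀ x ∈ Set.Icc (0:ℝ) (Γ.len j), StrictConvexOn ℝ (Set.univ : Set ℝ) (L j x)
  superlinear : ∀ j, ∀ x ∈ Set.Icc (0:ℝ) (Γ.len j), ∀ C : ℝ, ∃ D : ℝ, ∀ v : ℝ,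
    C * |v| - D ≤ L j x v
  vertex_consistent : ∀ i j, ∀ s ∈ Set.Icc (0:ℝ) (Γ.len i), ∀ t ∈ Set.Icc (0:ℝ) (Γ.len j),
    Γ.σ i s = Γ.σ j t → L i s 0 = L j t 0

namespace TonelliLagrangian

variable {Γ : MetricGraph}

/-- The value of the Lagrangian at a point of `G` (via a choice of edge containing it). -/
noncomputable def lagOf (Λ : TonelliLagrangian Γ) (x : Γ.G) (v : ℝ) : ℝ :=
  Λ.L (Γ.cover x).choose (Γ.cover x).choose_spec.choose v

/-- The velocity partial derivative `∂_v L` at a point of `G`. -/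
noncomputable def lagVOf (Λ : TonelliLagrangian Γ) (x : Γ.G) (v : ℝ) : ℝ :=
  deriv (fun w => Λ.L (Γ.cover x).choose (Γ.cover x).choose_spec.choose w) v

/-- The action of a curve `γ : [a,b] → G`. -/
noncomputable def action (Λ : TonelliLagrangian Γ) (a b : ℝ) (γ : ℝ → Γ.G) : ℝ :=
  ∫ t in a..b, Λ.lagOf (γ t) (Γ.gderiv γ t)

/-- The integrand of the action is integrable (i.e. the action is finite). -/
def ActionIntegrableOn (Λ : TonelliLagrangian Γ) (a b : ℝ) (γ : ℝ → Γ.G) : Prop :=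
  IntegrableOn (fun t => Λ.lagOf (γ t) (Γ.gderiv γ t)) (Set.Icc a b)

/-- An action minimizer with fixed endpoints. -/
def Minimizer (Λ : TonelliLagrangian Γ) (a b : ℝ) (γ : ℝ → Γ.G) : Prop :=
  Γ.AbsContOn a b γ ∧ Λ.ActionIntegrableOn a b γ ∧
  ∀ α : ℝ → Γ.G, Γ.AbsContOn a b α → Λ.ActionIntegrableOn a b α →
    α a = γ a → α b = γ b → Λ.action a b γ ≤ Λ.action a b α

/-- `h_t(x,y)`: minimal action among absolutely continuous curves from `x` to `y` in time `t`. -/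
noncomputable def ht (Λ : TonelliLagrangian Γ) (t : ℝ) (x y : Γ.G) : ℝ :=
  sInf {r | ∃ γ : ℝ → Γ.G, Γ.AbsContOn 0 t γ ∧ γ 0 = x ∧ γ t = y ∧
    Λ.ActionIntegrableOn 0 t γ ∧ r = Λ.action 0 t γ}

/-- `c` is the critical value of the Lagrangian. -/
def IsCriticalValue (Λ : TonelliLagrangian Γ) (c : ℝ) : Prop :=
  (∀ k : ℝ, c < k → ∀ x y : Γ.G,
    Filter.liminf (fun t : ℝ => ((Λ.ht t x y + k * t : ℝ) : EReal)) Filter.atTop = ⊤) ∧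
  (∀ k : ℝ, k < c → ∀ x y : Γ.G,
    Filter.liminf (fun t : ℝ => ((Λ.ht t x y + k * t : ℝ) : EReal)) Filter.atTop = ⊥) ∧
  (∀ x y : Γ.G, ∃ r : ℝ,
    Filter.liminf (fun t : ℝ => ((Λ.ht t x y + c * t : ℝ) : EReal)) Filter.atTop = (r : EReal))

/-- The Peierls barrier `h(x,y) = liminf_{t→∞} (h_t(x,y) + ct)`. -/
noncomputable def peierls (Λ : TonelliLagrangian Γ) (c : ℝ) (x y : Γ.G) : ℝ :=
  (Filter.liminf (fun t : ℝ => ((Λ.ht t x y + c * t : ℝ) : EReal)) Filter.atTop).toReal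

/-- The Mañé potential `Φ(x,y) = inf_{t>0} (h_t(x,y) + ct)`. -/
noncomputable def mane (Λ : TonelliLagrangian Γ) (c : ℝ) (x y : Γ.G) : ℝ :=
  sInf {r | ∃ t : ℝ, 0 < t ∧ r = Λ.ht t x y + c * t}

/-- The Aubry set: points with `h(x,x) = 0`. -/
def aubrySet (Λ : TonelliLagrangian Γ) (c : ℝ) : Set Γ.G :=
  {x | Λ.peierls c x x = 0}

/-- A dominated function: `u(y) - u(x) ≤ h_t(x,y) + ct`. -/
def Dominated (Λ : TonelliLagrangian Γ) (c : ℝ) (u : Γ.G → ℝ) : Prop :=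
  ∀ x y : Γ.G, ∀ t : ℝ, 0 < t → u y - u x ≤ Λ.ht t x y + c * t

/-- The curve `γ` calibrates the function `u` on the time interval `J`. -/
def Calibrates (Λ : TonelliLagrangian Γ) (c : ℝ) (J : Set ℝ) (γ : ℝ → Γ.G)
    (u : Γ.G → ℝ) : Prop :=
  ∀ t ∈ J, ∀ s ∈ J, t ≤ s → Λ.ActionIntegrableOn t s γ ∧
    u (γ s) - u (γ t) = Λ.action t s γ + c * (s - t)

/-- Backward weak KAM solution. -/
def BackwardWeakKAM (Λ : TonelliLagrangian Γ) (c : ℝ) (u : Γ.G → ℝ) : Prop :=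
  Continuous u ∧ Λ.Dominated c u ∧
  ∀ x : Γ.G, ∃ γ : ℝ → Γ.G, γ 0 = x ∧ (∀ a : ℝ, a ≤ 0 → Γ.AbsContOn a 0 γ) ∧
    Λ.Calibrates c (Set.Iic 0) γ u

/-- Forward weak KAM solution. -/
def ForwardWeakKAM (Λ : TonelliLagrangian Γ) (c : ℝ) (u : Γ.G → ℝ) : Prop :=
  Continuous u ∧ Λ.Dominated c u ∧
  ∀ x : Γ.G, ∃ γ : ℝ → Γ.G, γ 0 = x ∧ (∀ b : ℝ, 0 ≤ b → Γ.AbsContOn 0 b γ) ∧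
    Λ.Calibrates c (Set.Ici 0) γ u

/-- Semi-static curve on a time interval `J`. -/
def SemiStatic (Λ : TonelliLagrangian Γ) (c : ℝ) (J : Set ℝ) (η : ℝ → Γ.G) : Prop :=
  ∀ t ∈ J, ∀ s ∈ J, t ≤ s → Λ.ActionIntegrableOn t s η ∧
    Λ.mane c (η t) (η s) = Λ.action t s η + c * (s - t)

/-- The Lax–Oleinik semigroup `(ℒ_t f)(x) = inf_y (f(y) + h_t(y,x))`. -/
noncomputable def lax (Λ : TonelliLagrangian Γ) (t : ℝ) (f : Γ.G → ℝ) (x : Γ.G) : ℝ :=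
  ⨅ y : Γ.G, (f y + Λ.ht t y x)

/-- The Lagrangian is symmetric at the vertices. -/
def SymmetricAtVertices (Λ : TonelliLagrangian Γ) : Prop :=
  ∀ e ∈ Γ.vertexSet, ∃ lam : ℝ → ℝ, ∀ j, ∀ s ∈ Set.Icc (0:ℝ) (Γ.len j),
    Γ.σ j s = e → ∀ z : ℝ, Λ.L j s z = lam |z|

/-- The Hamiltonian `H_j(x,p)`, where at the endpoints of the edge only
incoming-or-zero velocities are used. -/
noncomputable def ham (Λ : TonelliLagrangian Γ) (j : Γ.E) (x p : ℝ) : ℝ :=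
  sSup {r | ∃ z : ℝ, ((x = 0 → 0 ≤ z) ∧ (x = Γ.len j → z ≤ 0)) ∧ r = -p * z - Λ.L j x z}

/-- Viscosity subsolution of `H(x, Du) = c` on the graph. -/
def ViscositySubsolution (Λ : TonelliLagrangian Γ) (c : ℝ) (u : Γ.G → ℝ) : Prop :=
  Continuous u ∧
  (∀ j : Γ.E, ∀ s ∈ Set.Ioo (0:ℝ) (Γ.len j), Γ.σ j s ∉ Γ.vertexSet →
    ∀ (φ : ℝ → ℝ) (p : ℝ), HasDerivAt φ p s →
      IsLocalMax (fun τ => u (Γ.σ j τ) - φ τ) s → Λ.ham j s p ≤ c) ∧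
  (∀ e ∈ Γ.vertexSet, ∀ ψ : Γ.G → ℝ, MetricGraph.C1AtVertex Γ ψ e →
    (∃ ε : ℝ, 0 < ε ∧ ∀ x : Γ.G, dist x e < ε → u x - ψ x ≤ u e - ψ e) →
    ∀ j : Γ.E, ∀ s ∈ Set.Icc (0:ℝ) (Γ.len j), Γ.σ j s = e →
    ∀ p : ℝ, HasDerivWithinAt (fun τ => ψ (Γ.σ j τ)) p (Set.Icc 0 (Γ.len j)) s →
      Λ.ham j s p ≤ c)

/-- Viscosity supersolution of `H(x, Du) = c` on the graph. -/
def ViscositySupersolution (Λ : TonelliLagrangian Γ) (c : ℝ) (u : Γ.G → ℝ) : Prop :=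
  Continuous u ∧
  (∀ j : Γ.E, ∀ s ∈ Set.Ioo (0:ℝ) (Γ.len j), Γ.σ j s ∉ Γ.vertexSet →
    ∀ (φ : ℝ → ℝ) (p : ℝ), HasDerivAt φ p s →
      IsLocalMin (fun τ => u (Γ.σ j τ) - φ τ) s → c ≤ Λ.ham j s p) ∧
  (∀ e ∈ Γ.vertexSet, ∀ ψ : Γ.G → ℝ, MetricGraph.C1AtVertex Γ ψ e →
    (∃ ε : ℝ, 0 < ε ∧ ∀ x : Γ.G, dist x e < ε → u e - ψ e ≤ u x - ψ x) →
    ∃ j : Γ.E, ∃ s ∈ Set.Icc (0:ℝ) (Γ.len j), Γ.σ j s = e ∧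
      ∃ p : ℝ, HasDerivWithinAt (fun τ => ψ (Γ.σ j τ)) p (Set.Icc 0 (Γ.len j)) s ∧
      c ≤ Λ.ham j s p)

/-- Viscosity subsolution of `u_t + H(x, D_x u) = 0` on `G × (0,T]`. -/
def EvoSubsolution (Λ : TonelliLagrangian Γ) (T : ℝ) (u : Γ.G → ℝ → ℝ) : Prop :=
  Continuous (fun q : Γ.G × ℝ => u q.1 q.2) ∧
  (∀ j : Γ.E, ∀ s ∈ Set.Ioo (0:ℝ) (Γ.len j), Γ.σ j s ∉ Γ.vertexSet →
    ∀ t ∈ Set.Ioc (0:ℝ) T, ∀ (φ : ℝ → ℝ → ℝ) (p q : ℝ),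
      HasDerivAt (fun τ => φ τ t) p s → HasDerivAt (fun r => φ s r) q t →
      (∃ ε : ℝ, 0 < ε ∧ ∀ τ r : ℝ, |τ - s| < ε → |r - t| < ε →
        u (Γ.σ j τ) r - φ τ r ≤ u (Γ.σ j s) t - φ s t) →
      q + Λ.ham j s p ≤ 0) ∧
  (∀ e ∈ Γ.vertexSet, ∀ t ∈ Set.Ioc (0:ℝ) T, ∀ ψ : Γ.G → ℝ → ℝ,
    MetricGraph.C1AtVertexT Γ ψ e t →
    (∃ ε : ℝ, 0 < ε ∧ ∀ x : Γ.G, ∀ r : ℝ, dist x e < ε → |r - t| < ε →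
      u x r - ψ x r ≤ u e t - ψ e t) →
    ∀ q : ℝ, HasDerivAt (fun r => ψ e r) q t →
    ∀ j : Γ.E, ∀ s ∈ Set.Icc (0:ℝ) (Γ.len j), Γ.σ j s = e →
    ∀ p : ℝ, HasDerivWithinAt (fun τ => ψ (Γ.σ j τ) t) p (Set.Icc 0 (Γ.len j)) s →
      q + Λ.ham j s p ≤ 0)

/-- Viscosity supersolution of `u_t + H(x, D_x u) = 0` on `G × (0,T]`. -/
def EvoSupersolution (Λ : TonelliLagrangian Γ) (T : ℝ) (u : Γ.G → ℝ → ℝ) : Prop :=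
  Continuous (fun q : Γ.G × ℝ => u q.1 q.2) ∧
  (∀ j : Γ.E, ∀ s ∈ Set.Ioo (0:ℝ) (Γ.len j), Γ.σ j s ∉ Γ.vertexSet →
    ∀ t ∈ Set.Ioc (0:ℝ) T, ∀ (φ : ℝ → ℝ → ℝ) (p q : ℝ),
      HasDerivAt (fun τ => φ τ t) p s → HasDerivAt (fun r => φ s r) q t →
      (∃ ε : ℝ, 0 < ε ∧ ∀ τ r : ℝ, |τ - s| < ε → |r - t| < ε →
        u (Γ.σ j s) t - φ s t ≤ u (Γ.σ j τ) r - φ τ r) →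
      0 ≤ q + Λ.ham j s p) ∧
  (∀ e ∈ Γ.vertexSet, ∀ t ∈ Set.Ioc (0:ℝ) T, ∀ ψ : Γ.G → ℝ → ℝ,
    MetricGraph.C1AtVertexT Γ ψ e t →
    (∃ ε : ℝ, 0 < ε ∧ ∀ x : Γ.G, ∀ r : ℝ, dist x e < ε → |r - t| < ε →
      u e t - ψ e t ≤ u x r - ψ x r) →
    ∀ q : ℝ, HasDerivAt (fun r => ψ e r) q t →
    ∃ j : Γ.E, ∃ s ∈ Set.Icc (0:ℝ) (Γ.len j), Γ.σ j s = e ∧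
      ∃ p : ℝ, HasDerivWithinAt (fun τ => ψ (Γ.σ j τ) t) p (Set.Icc 0 (Γ.len j)) s ∧
      0 ≤ q + Λ.ham j s p)

end TonelliLagrangian

/-! ### The Lagrangian is bounded below -/

/-- A convex function which is at least `f 0` at `-R` and `R` is bounded below for `v ≥ 0`:
beyond `R` it stays above `f 0`, and on `[0, R]` it stays above the line through
the points at `-R` and `0`. -/
lemma convex_lower_bound_of_nonneg {f : ℝ → ℝ} (hf : ConvexOn ℝ Set.univ f) {R : ℝ} (hR : 0 < R)
    (h1 : f 0 ≤ f R) {v : ℝ} (hv : 0 ≤ v) :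
    f 0 - |f 0 - f (-R)| ≤ f v := by
  rcases le_or_gt R v with h | h
  · have hv0 : 0 < v := hR.trans_le h
    have hc := hf.2 (mem_univ 0) (mem_univ v)
      (show 0 ≤ 1 - R / v by rw [sub_nonneg, div_le_one hv0]; exact h)
      (show 0 ≤ R / v by positivity) (by ring)
    have e : (1 - R / v) • (0 : ℝ) + (R / v) • v = R := by
      simp only [smul_eq_mul]; field_simp; ring
    rw [e] at hc
    simp only [smul_eq_mul] at hc
    have hp : 0 < R / v := by positivity
    have : 0 ≤ R / v * (f v - f 0) := by nlinarith
    have := nonneg_of_mul_nonneg_right this hp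
    linarith [abs_nonneg (f 0 - f (-R))]
  · have hs : 0 < v + R := by linarith
    have hc := hf.2 (mem_univ v) (mem_univ (-R)) (show 0 ≤ R / (v + R) by positivity)
      (show 0 ≤ v / (v + R) by positivity) (by field_simp; ring)
    have e : (R / (v + R)) • v + (v / (v + R)) • (-R) = 0 := by
      simp only [smul_eq_mul]; field_simp; ring
    rw [e] at hc
    simp only [smul_eq_mul] at hc
    have hc' : (v + R) * f 0 ≤ R * f v + v * f (-R) := by
      have := mul_le_mul_of_nonneg_left hc hs.le
      have e2 : (v + R) * (R / (v + R) * f v + v / (v + R) * f (-R)) = R * f v + v * f (-R) := by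
        field_simp
      linarith
    have h3 : -(R * |f 0 - f (-R)|) ≤ v * (f 0 - f (-R)) := by
      nlinarith [neg_abs_le (f 0 - f (-R)), abs_nonneg (f 0 - f (-R))]
    have : R * (f 0 - |f 0 - f (-R)|) ≤ R * f v := by nlinarith
    exact le_of_mul_le_mul_left this hR

lemma convex_lower_bound {f : ℝ → ℝ} (hf : ConvexOn ℝ Set.univ f) {R : ℝ} (hR : 0 < R)
    (h1 : f 0 ≤ f R) (h2 : f 0 ≤ f (-R)) (v : ℝ) :
    f 0 - |f 0 - f (-R)| - |f 0 - f R| ≤ f v := by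
  rcases le_total 0 v with hv | hv
  · linarith [convex_lower_bound_of_nonneg hf hR h1 hv, abs_nonneg (f 0 - f R)]
  · have hg : ConvexOn ℝ Set.univ (fun w => f (-w)) := by
      refine ⟨convex_univ, fun x _ y _ a b ha hb hab => ?_⟩
      have := hf.2 (mem_univ (-x)) (mem_univ (-y)) ha hb hab
      simp only [smul_eq_mul] at this ⊢
      convert this using 2
      ring
    have := convex_lower_bound_of_nonneg hg hR (by simpa using h2) (neg_nonneg.2 hv)
    simp only [neg_zero, neg_neg] at this
    linarith [abs_nonneg (f 0 - f (-R))]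

namespace TonelliLagrangian

variable {Γ : MetricGraph}

/-- Superlinearity is only assumed pointwise in `x`; convexity makes the resulting lower bound
locally uniform, and compactness of the edge makes it uniform. -/
lemma exists_lower_bound_edge (Λ : TonelliLagrangian Γ) (j : Γ.E) :
    ∃ M : ℝ, ∀ x ∈ Set.Icc (0:ℝ) (Γ.len j), ∀ v, M ≤ Λ.L j x v := by
  refine isCompact_Icc.induction_on
    (p := fun s => ∃ M : ℝ, ∀ x ∈ s, ∀ v, M ≤ Λ.L j x v) ⟨0, by simp⟩ ?_ ?_ ?_
  · rintro s t hst ⟨M, hM⟩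
    exact ⟨M, fun x hx => hM x (hst hx)⟩
  · rintro s t ⟨M, hM⟩ ⟨N, hN⟩
    refine ⟨min M N, fun x hx v => ?_⟩
    rcases hx with hx | hx
    · exact (min_le_left _ _).trans (hM x hx v)
    · exact (min_le_right _ _).trans (hN x hx v)
  · intro x₀ hx₀
    have hcont : ∀ v : ℝ, ContinuousWithinAt (fun x => Λ.L j x v) (Set.Icc 0 (Γ.len j)) x₀ := by
      intro v
      have h := (Λ.smooth j).continuousOn
      have h2 : ContinuousOn (fun x : ℝ => (x, v)) (Set.Icc 0 (Γ.len j)) := by fun_prop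
      exact (h.comp h2 (fun x hx => ⟨hx, mem_univ _⟩)) x₀ hx₀
    obtain ⟨D, hD⟩ := Λ.superlinear j x₀ hx₀ 1
    set R := |D| + |Λ.L j x₀ 0| + 1 with hRdef
    have hR : 0 < R := by positivity
    have hgt : Λ.L j x₀ 0 < R - D := by
      rw [hRdef]; linarith [le_abs_self D, le_abs_self (Λ.L j x₀ 0)]
    have hp : Λ.L j x₀ 0 < Λ.L j x₀ R := by
      have := hD R; rw [abs_of_pos hR] at this; linarith
    have hm : Λ.L j x₀ 0 < Λ.L j x₀ (-R) := by
      have := hD (-R); rw [abs_neg, abs_of_pos hR] at this; linarith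
    set g : ℝ → ℝ := fun x => Λ.L j x 0 - |Λ.L j x 0 - Λ.L j x (-R)| - |Λ.L j x 0 - Λ.L j x R|
      with hg
    have hgc : ContinuousWithinAt g (Set.Icc 0 (Γ.len j)) x₀ :=
      ((hcont 0).sub ((hcont 0).sub (hcont _)).abs).sub ((hcont 0).sub (hcont _)).abs
    have e1 := (hcont 0).eventually_lt (hcont R) hp
    have e2 := (hcont 0).eventually_lt (hcont (-R)) hm
    have e3 : ∀ᶠ x in nhdsWithin x₀ (Set.Icc 0 (Γ.len j)), g x₀ - 1 < g x :=
      hgc.eventually (lt_mem_nhds (by linarith))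
    refine ⟨_, (e1.and (e2.and (e3.and self_mem_nhdsWithin))), g x₀ - 1, ?_⟩
    rintro x ⟨h1, h2, h3, hx⟩ v
    exact h3.le.trans (convex_lower_bound (Λ.strictconv j x hx).convexOn hR h1.le h2.le v)

lemma exists_lower_bound (Λ : TonelliLagrangian Γ) :
    ∃ M : ℝ, ∀ (x : Γ.G) (v : ℝ), M ≤ Λ.lagOf x v := by
  choose M hM using Λ.exists_lower_bound_edge
  obtain ⟨N, hN⟩ := (Set.finite_range M).bddBelow
  exact ⟨N, fun x v => (hN (mem_range_self _)).trans
    (hM _ _ (Γ.cover x).choose_spec.choose_spec.1 v)⟩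

/-- The set of actions whose infimum defines `ht` is bounded below, so that `ht` is a genuine
infimum. -/
lemma ht_le_action (Λ : TonelliLagrangian Γ) {t : ℝ} (ht : 0 ≤ t) {γ : ℝ → Γ.G}
    (hac : Γ.AbsContOn 0 t γ) (hint : Λ.ActionIntegrableOn 0 t γ) :
    Λ.ht t (γ 0) (γ t) ≤ Λ.action 0 t γ := by
  obtain ⟨M, hM⟩ := Λ.exists_lower_bound
  refine csInf_le ⟨M * t, ?_⟩ ⟨γ, hac, rfl, rfl, hint, rfl⟩
  rintro r ⟨α, -, -, -, hα, rfl⟩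
  have h := intervalIntegral.integral_mono_on (μ := volume) (f := fun _ => M) ht
    intervalIntegrable_const
    ((intervalIntegrable_iff_integrableOn_Icc_of_le ht).2 hα) (fun s _ => hM (α s) _)
  simp only [intervalIntegral.integral_const, sub_zero, smul_eq_mul] at h
  rw [mul_comm]
  exact h

end TonelliLagrangian

/-! ### The edgewise derivative is local and translation invariant -/

namespace MetricGraph

variable {Γ : MetricGraph}

lemma HasGDerivAt.of_shift {α γ : ℝ → Γ.G} {t d v : ℝ}
    (h : ∀ᶠ s in nhds t, α s = γ (s + d)) (hγ : Γ.HasGDerivAt γ (t + d) v) :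
    Γ.HasGDerivAt α t v := by
  have ht : α t = γ (t + d) := h.self_of_nhds
  have hmap : Tendsto (fun s : ℝ => s + d) (nhds t) (nhds (t + d)) :=
    (continuous_id.add continuous_const).tendsto t
  rcases hγ with ⟨hv, rfl, hε⟩ | ⟨hv, j, f, h1, h2, h3⟩
  · refine Or.inl ⟨ht ▸ hv, rfl, fun ε hε0 => ?_⟩
    obtain ⟨δ, hδ, H⟩ := hε ε hε0
    obtain ⟨δ', hδ', H'⟩ := Metric.eventually_nhds_iff.1 h
    refine ⟨min δ δ', lt_min hδ hδ', fun s hs => ?_⟩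
    rw [H' (by rw [Real.dist_eq]; exact hs.trans_le (min_le_right _ _)), ht]
    have := H (s + d) (by rw [add_sub_add_right_eq_sub]; exact hs.trans_le (min_le_left _ _))
    rwa [add_sub_add_right_eq_sub] at this
  · refine Or.inr ⟨ht ▸ hv, j, fun s => f (s + d), ?_, hmap.eventually h2, h3.comp_add_const t d⟩
    filter_upwards [h, hmap.eventually h1] with s hs hs'
    rw [hs, hs']

lemma gderiv_shift {α γ : ℝ → Γ.G} {t d : ℝ} (h : ∀ᶠ s in nhds t, α s = γ (s + d)) :
    Γ.gderiv α t = Γ.gderiv γ (t + d) := by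
  have h' : ∀ᶠ s in nhds (t + d), γ s = α (s + -d) := by
    have hmap : Tendsto (fun s : ℝ => s + -d) (nhds (t + d)) (nhds t) := by
      have : Continuous fun s : ℝ => s + -d := by fun_prop
      simpa using this.tendsto (t + d)
    filter_upwards [hmap.eventually h] with s hs
    rw [hs]; simp
  have hP : Γ.HasGDerivAt α t = Γ.HasGDerivAt γ (t + d) := by
    funext v
    refine propext ⟨fun hv => ?_, fun hv => HasGDerivAt.of_shift h hv⟩
    exact HasGDerivAt.of_shift h' (by simpa using hv)
  -- `gderiv` depends only on the predicate `HasGDerivAt α t`, its value being chosen from it.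
  unfold gderiv
  rw [hP]

/-! ### Translation and concatenation of absolutely continuous curves -/

lemma AbsContOn.of_shift {a b a' b' d : ℝ} {α γ : ℝ → Γ.G} (hγ : Γ.AbsContOn a b γ)
    (h : ∀ s ∈ Set.Icc a' b', s + d ∈ Set.Icc a b ∧ α s = γ (s + d)) : Γ.AbsContOn a' b' α := by
  intro ε hε
  obtain ⟨δ, hδ, H⟩ := hγ ε hε
  refine ⟨δ, hδ, fun n c e hce hdisj hsum => ?_⟩
  have := H n (fun i => c i + d) (fun i => e i + d)
    (fun i => ⟨(h _ (hce i).1).1, (h _ (hce i).2.1).1, by linarith [(hce i).2.2]⟩)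
    (fun i hi k hk hik => by
      refine Set.disjoint_left.2 fun x hx hx' => ?_
      have h1 : x - d ∈ Set.Ioo (c i) (e i) := ⟨by linarith [hx.1], by linarith [hx.2]⟩
      have h2 : x - d ∈ Set.Ioo (c k) (e k) := ⟨by linarith [hx'.1], by linarith [hx'.2]⟩
      exact Set.disjoint_left.1 (hdisj hi hk hik) h1 h2)
    (by simpa using hsum)
  convert this using 3 with i
  · exact (h _ (hce i).1).2
  · exact (h _ (hce i).2.1).2

lemma AbsContOn.trans {a m b : ℝ} {γ : ℝ → Γ.G} (ham : a ≤ m) (hmb : m ≤ b)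
    (h1 : Γ.AbsContOn a m γ) (h2 : Γ.AbsContOn m b γ) : Γ.AbsContOn a b γ := by
  intro ε hε
  obtain ⟨δ₁, hδ₁, H₁⟩ := h1 (ε / 2) (by linarith)
  obtain ⟨δ₂, hδ₂, H₂⟩ := h2 (ε / 2) (by linarith)
  refine ⟨min δ₁ δ₂, lt_min hδ₁ hδ₂, fun n c d hcd hdisj hsum => ?_⟩
  -- Each interval is cut at `m` into its parts in `[a, m]` and `[m, b]`, possibly degenerate.
  have A₁ := H₁ n (fun i => min (c i) m) (fun i => min (d i) m)
    (fun i => ⟨⟨le_min (hcd i).1.1 ham, min_le_right _ _⟩,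
      ⟨le_min (hcd i).2.1.1 ham, min_le_right _ _⟩, min_le_min_right _ (hcd i).2.2⟩)
    (fun i hi k hk hik => by
      have hsub : ∀ i, Set.Ioo (min (c i) m) (min (d i) m) ⊆ Set.Ioo (c i) (d i) := by
        intro i x hx
        have := hx.2
        rw [lt_min_iff] at this
        refine ⟨?_, this.1⟩
        rcases min_lt_iff.1 hx.1 with h | h
        · exact h
        · exact absurd h this.2.not_gt
      exact (hdisj hi hk hik).mono (hsub i) (hsub k))
    (by
      refine lt_of_le_of_lt (Finset.sum_le_sum fun i _ => ?_) (hsum.trans_le (min_le_left _ _))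
      have := (hcd i).2.2
      grind)
  have A₂ := H₂ n (fun i => max (c i) m) (fun i => max (d i) m)
    (fun i => ⟨⟨le_max_right _ _, max_le (hcd i).1.2 hmb⟩,
      ⟨le_max_right _ _, max_le (hcd i).2.1.2 hmb⟩, max_le_max_right _ (hcd i).2.2⟩)
    (fun i hi k hk hik => by
      have hsub : ∀ i, Set.Ioo (max (c i) m) (max (d i) m) ⊆ Set.Ioo (c i) (d i) := by
        intro i x hx
        have := hx.1
        rw [max_lt_iff] at this
        refine ⟨this.1, ?_⟩
        rcases lt_max_iff.1 hx.2 with h | h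
        · exact h
        · exact absurd h this.2.not_gt
      exact (hdisj hi hk hik).mono (hsub i) (hsub k))
    (by
      refine lt_of_le_of_lt (Finset.sum_le_sum fun i _ => ?_) (hsum.trans_le (min_le_right _ _))
      have := (hcd i).2.2
      grind)
  have key : ∀ i, dist (γ (c i)) (γ (d i)) ≤ dist (γ (min (c i) m)) (γ (min (d i) m)) +
      dist (γ (max (c i) m)) (γ (max (d i) m)) := by
    intro i
    have hle := (hcd i).2.2
    rcases le_total (c i) m with h | h <;> rcases le_total (d i) m with h' | h'
    · simp [h, h']
    · simp only [h, h', min_eq_left, min_eq_right, max_eq_left, max_eq_right]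
      exact dist_triangle _ _ _
    · have : c i = d i := by linarith
      simp [this]
    · simp [h, h']
  have := Finset.sum_le_sum fun i (_ : i ∈ Finset.univ) => key i
  rw [Finset.sum_add_distrib] at this
  linarith

lemma absContOn_const (a b : ℝ) (x : Γ.G) : Γ.AbsContOn a b (fun _ => x) :=
  fun ε hε => ⟨1, one_pos, fun n c d _ _ _ => by simpa using hε⟩

end MetricGraph

/-! ### Constant curves and iterated loops -/

namespace TonelliLagrangian

variable {Γ : MetricGraph}

lemma actionIntegrableOn_const (Λ : TonelliLagrangian Γ) (a b : ℝ) (x : Γ.G) :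
    Λ.ActionIntegrableOn a b (fun _ => x) := by
  -- The derivative of a constant curve does not depend on time, by translation invariance.
  have h : ∀ t, Γ.gderiv (fun _ => x) t = Γ.gderiv (fun _ => x) 0 := fun t => by
    have := MetricGraph.gderiv_shift (α := fun _ : ℝ => x) (γ := fun _ : ℝ => x) (t := 0) (d := t)
      (Eventually.of_forall fun _ => rfl)
    rw [this, zero_add]
  unfold ActionIntegrableOn
  simp only [h]
  exact integrableOn_const (by simp)

/-- A loop `γ : [a, b] → G` traversed `n` times, starting at time `0`. -/
lemma exists_iterate (Λ : TonelliLagrangian Γ) {a b : ℝ} (hab : a < b) {γ : ℝ → Γ.G}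
    (hac : Γ.AbsContOn a b γ) (hint : Λ.ActionIntegrableOn a b γ) (hcl : γ a = γ b) :
    ∃ α : ℝ → Γ.G, ∀ n : ℕ, Γ.AbsContOn 0 (n * (b - a)) α ∧
      Λ.ActionIntegrableOn 0 (n * (b - a)) α ∧ α (n * (b - a)) = γ a ∧
      Λ.action 0 (n * (b - a)) α = n * Λ.action a b γ := by
  have hT : 0 < b - a := sub_pos.2 hab
  set T := b - a with hTdef
  set α : ℝ → Γ.G := fun s => γ (a + toIcoMod hT 0 s) with hα
  have hαn : ∀ n : ℕ, α (n * T) = γ a := by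
    intro n
    have : toIcoMod hT 0 (n * T) = 0 :=
      (toIcoMod_eq_iff hT).2 ⟨⟨le_rfl, by simpa using hT⟩, n, by simp⟩
    simp [hα, this]
  -- On the `n`-th period the iterated curve is a translate of `γ`; the right end uses `γ a = γ b`.
  have hpiece : ∀ n : ℕ, ∀ s ∈ Set.Icc (n * T) ((n + 1 : ℕ) * T),
      s + (a - n * T) ∈ Set.Icc a b ∧ α s = γ (s + (a - n * T)) := by
    intro n s hs
    have hs2 : s ≤ n * T + T := by have := hs.2; push_cast at this; linarith
    refine ⟨⟨by linarith [hs.1], by linarith⟩, ?_⟩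
    rcases hs2.lt_or_eq with h | h
    · have : toIcoMod hT 0 s = s - n * T :=
        (toIcoMod_eq_iff hT).2 ⟨⟨by linarith [hs.1], by linarith⟩, n, by simp⟩
      simp only [hα, this]
      congr 1
      ring
    · have e : s = ((n + 1 : ℕ) : ℝ) * T := by push_cast; linarith
      have e2 : s + (a - n * T) = b := by linarith
      rw [e2, e, hαn, hcl]
  have hint' : IntervalIntegrable (fun t => Λ.lagOf (γ t) (Γ.gderiv γ t)) volume a b :=
    (intervalIntegrable_iff_integrableOn_Icc_of_le hab.le).2 hint
  have hle : ∀ n : ℕ, (n : ℝ) * T ≤ (n + 1 : ℕ) * T := fun n => by push_cast; linarith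
  have hlag : ∀ n : ℕ, Set.EqOn (fun s => Λ.lagOf (γ (s + (a - n * T)))
      (Γ.gderiv γ (s + (a - n * T)))) (fun s => Λ.lagOf (α s) (Γ.gderiv α s))
      (Set.Ioo (n * T) ((n + 1 : ℕ) * T)) := by
    intro n s hs
    have hev : ∀ᶠ r in nhds s, α r = γ (r + (a - n * T)) := by
      filter_upwards [Ioo_mem_nhds hs.1 hs.2] with r hr
      exact (hpiece n r (Ioo_subset_Icc_self hr)).2
    simp only [MetricGraph.gderiv_shift hev, (hpiece n s (Ioo_subset_Icc_self hs)).2]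
  have hI : ∀ n : ℕ, IntervalIntegrable (fun s => Λ.lagOf (α s) (Γ.gderiv α s)) volume
      (n * T) ((n + 1 : ℕ) * T) := by
    intro n
    have h := hint'.comp_add_right (a - n * T)
    have e1 : a - (a - n * T) = n * T := by ring
    have e2 : b - (a - n * T) = (n + 1 : ℕ) * T := by push_cast; linarith
    rw [e1, e2] at h
    exact h.congr_uIoo (by rw [uIoo_of_le (hle n)]; exact hlag n)
  have hA : ∀ n : ℕ, ∫ s in (n * T)..((n + 1 : ℕ) * T), Λ.lagOf (α s) (Γ.gderiv α s) =
      Λ.action a b γ := by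
    intro n
    rw [← intervalIntegral.integral_congr_Ioo_of_le (hle n) (hlag n),
      intervalIntegral.integral_comp_add_right
        (fun t => Λ.lagOf (γ t) (Γ.gderiv γ t)) (a - n * T)]
    have e1 : n * T + (a - n * T) = a := by ring
    have e2 : (n + 1 : ℕ) * T + (a - n * T) = b := by push_cast; linarith
    rw [e1, e2]
    rfl
  refine ⟨α, fun n => ?_⟩
  have h0 : (0 : ℝ) ≤ n * T := by positivity
  suffices H : Γ.AbsContOn 0 (n * T) α ∧
      IntervalIntegrable (fun s => Λ.lagOf (α s) (Γ.gderiv α s)) volume 0 (n * T) ∧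
      ∫ s in (0:ℝ)..(n * T), Λ.lagOf (α s) (Γ.gderiv α s) = n * Λ.action a b γ from
    ⟨H.1, (intervalIntegrable_iff_integrableOn_Icc_of_le h0).1 H.2.1, hαn n, H.2.2⟩
  induction n with
  | zero =>
    refine ⟨?_, by simp, by simp⟩
    refine (MetricGraph.absContOn_const 0 0 (α 0)).of_shift (d := 0) fun s hs => ?_
    have : s = 0 := by simpa using hs
    simp [this]
  | succ n ih =>
    have h0' : (0 : ℝ) ≤ n * T := by positivity
    obtain ⟨i1, i2, i3⟩ := ih h0'
    refine ⟨i1.trans h0' (hle n) (hac.of_shift (hpiece n)), i2.trans (hI n), ?_⟩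
    rw [← intervalIntegral.integral_add_adjacent_intervals i2 (hI n), i3, hA n]
    push_cast
    ring

end TonelliLagrangian

/-- the critical value is the infimum of the `k` making the
`k`-penalized action of every closed curve nonnegative. -/
theorem critical_value_eq_sInf_closed_curves
    (Γ : MetricGraph) (Λ : TonelliLagrangian Γ) (c : ℝ) (hc : Λ.IsCriticalValue c) :
    c = sInf {k : ℝ | ∀ a b : ℝ, a ≤ b → ∀ γ : ℝ → Γ.G,
      Γ.AbsContOn a b γ → Λ.ActionIntegrableOn a b γ → γ a = γ b →
      0 ≤ Λ.action a b γ + k * (b - a)} := by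
  -- Above `c`: iterating a loop of negative penalized action would keep `h_t(x,x) + kt`
  -- from tending to `+∞`.
  have above : ∀ k : ℝ, c < k → ∀ a b : ℝ, a ≤ b → ∀ γ : ℝ → Γ.G,
      Γ.AbsContOn a b γ → Λ.ActionIntegrableOn a b γ → γ a = γ b →
      0 ≤ Λ.action a b γ + k * (b - a) := by
    intro k hk a b hab γ hac hint hcl
    rcases hab.eq_or_lt with rfl | hlt
    · simp [TonelliLagrangian.action]
    by_contra! hneg
    have hlim := hc.1 k hk (γ a) (γ a)
    have hev : ∀ᶠ t : ℝ in atTop, (0 : EReal) < ((Λ.ht t (γ a) (γ a) + k * t : ℝ) : EReal) :=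
      eventually_lt_of_lt_liminf (by rw [hlim]; exact EReal.zero_lt_top)
    have hT : 0 < b - a := sub_pos.2 hlt
    have htend : Tendsto (fun n : ℕ => (n : ℝ) * (b - a)) atTop atTop :=
      tendsto_natCast_atTop_atTop.atTop_mul_const hT
    obtain ⟨n, hn⟩ := (htend.eventually hev).exists
    obtain ⟨α, hα⟩ := Λ.exists_iterate hlt hac hint hcl
    obtain ⟨h1, h2, h3, h4⟩ := hα n
    have h5 : α 0 = γ a := by simpa using (hα 0).2.2.1
    have hle := Λ.ht_le_action (by positivity) h1 h2
    rw [h3, h4, h5] at hle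
    have hn' : 0 < Λ.ht (n * (b - a)) (γ a) (γ a) + k * (n * (b - a)) := by exact_mod_cast hn
    have hn0 : (0 : ℝ) ≤ n := n.cast_nonneg
    nlinarith
  -- Below `c`: `h_t(x,x) + kt` takes a negative value, so some loop has negative penalized action.
  have below : ∀ k : ℝ, (∀ a b : ℝ, a ≤ b → ∀ γ : ℝ → Γ.G,
      Γ.AbsContOn a b γ → Λ.ActionIntegrableOn a b γ → γ a = γ b →
      0 ≤ Λ.action a b γ + k * (b - a)) → c ≤ k := by
    intro k hk
    by_contra! hlt
    obtain ⟨j⟩ := Γ.neE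
    have hlim := hc.2.1 k hlt (Γ.σ j 0) (Γ.σ j 0)
    have hfr : ∃ᶠ t : ℝ in atTop,
        ((Λ.ht t (Γ.σ j 0) (Γ.σ j 0) + k * t : ℝ) : EReal) < 0 :=
      frequently_lt_of_liminf_lt (h := by rw [hlim]; exact EReal.bot_lt_zero)
    obtain ⟨t, hneg, ht0⟩ := (hfr.and_eventually (eventually_ge_atTop 0)).exists
    have hneg' : Λ.ht t (Γ.σ j 0) (Γ.σ j 0) < -(k * t) := by
      have : Λ.ht t (Γ.σ j 0) (Γ.σ j 0) + k * t < 0 := by exact_mod_cast hneg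
      linarith
    -- The constant curve shows that the infimum defining `ht` is over a nonempty set.
    obtain ⟨r, ⟨γ, h1, h2, h3, h4, rfl⟩, hr⟩ := exists_lt_of_csInf_lt (by
      exact ⟨_, fun _ => Γ.σ j 0, MetricGraph.absContOn_const _ _ _, rfl, rfl,
        Λ.actionIntegrableOn_const _ _ _, rfl⟩) hneg'
    have := hk 0 t ht0 γ h1 h4 (h2.trans h3.symm)
    rw [sub_zero] at this
    linarith
  symm
  apply csInf_eq_of_forall_ge_of_forall_gt_exists_lt
  · exact ⟨c + 1, above (c + 1) (by linarith)⟩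
  · exact below
  · exact fun w hw => ⟨(c + w) / 2, above ((c + w) / 2) (by linarith), by linarith⟩
end

section
/- Let L be a Tonelli Lagrangian on a metric graph G with critical value c. If η : J → G is a semi-static curve, then for Lebesgue-almost every t ∈ J one has ∂_v L(η(t), η̇(t))·η̇(t) = L(η(t), η̇(t)) + c (semi-static curves have energy c). -/
/-!
A semi-static curve minimizes `∫ (L + c)` among all curves with the same endpoints and
*arbitrary* duration, so it may be compared with its own affine reparametrizations. Traversing
`η` at `r` times its speed gives, on every subinterval,
`r ∫ (L(η, η̇) + c) ≤ ∫ (L(η, r η̇) + c)` (`SemiStatic.integral_le`), and by Lebesgue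
differentiation `r (L(η, η̇) + c) ≤ L(η, r η̇) + c` almost everywhere (`SemiStatic.ae_le`), as
soon as the reparametrized curve has finite action. The two sides agree at `r = 1`, so their
derivatives in `r` agree there if the inequality holds for `r` on both sides of `1`; this is the
claim `∂ᵥL · η̇ = L + c`.

For `r < 1` finiteness of the action follows from convexity. For `r > 1` a bound on the speed is
needed, and the inequalities for `r = 1 / k` supply it: with `k` of the order of `|η̇|` they read
`L(η, η̇) + c ≤ k · const`, which bounds `|η̇|` because superlinearity is uniform over the graph
(`exists_uniform_superlinear`). Measurability of the integrand comes from decomposing the time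
interval according to the open cell of an edge or the vertex that the curve occupies
(`aestronglyMeasurable_lagOf`). Existence of the edgewise derivative almost everywhere plays no
role: its junk value `0` is compatible with affine reparametrization (`gderiv_comp_affine`).
-/

open Filter Set

open MeasureTheory

/-! ### The edge structure and the edgewise derivative -/

namespace MetricGraph

variable {Γ : MetricGraph}

lemma continuousOn_edge (j : Γ.E) : ContinuousOn (Γ.σ j) (Icc 0 (Γ.len j)) := by
  have : LipschitzOnWith 1 (Γ.σ j) (Icc 0 (Γ.len j)) :=
    LipschitzOnWith.of_dist_le_mul
      (fun x hx y hy => by simpa [Real.dist_eq] using Γ.σ_lip j x hx y hy)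
  exact this.continuousOn

lemma finite_vertexSet : Γ.vertexSet.Finite := by
  have : Γ.vertexSet = range (fun j => Γ.σ j 0) ∪ range (fun j => Γ.σ j (Γ.len j)) := by
    ext x
    simp only [vertexSet, mem_ofPred_eq, mem_union, mem_range, eq_comm (a := x), exists_or]
  rw [this]
  exact (finite_range _).union (finite_range _)

lemma mem_Ioo_of_notMem_vertexSet {j : Γ.E} {s : ℝ} (hs : s ∈ Icc 0 (Γ.len j))
    (h : Γ.σ j s ∉ Γ.vertexSet) : s ∈ Ioo 0 (Γ.len j) := by
  refine ⟨lt_of_le_of_ne hs.1 ?_, lt_of_le_of_ne hs.2 ?_⟩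
  · rintro rfl
    exact h ⟨j, Or.inl rfl⟩
  · rintro rfl
    exact h ⟨j, Or.inr rfl⟩

lemma edge_unique {i j : Γ.E} {s t : ℝ} (hs : s ∈ Icc 0 (Γ.len i)) (ht : t ∈ Icc 0 (Γ.len j))
    (h : Γ.σ i s = Γ.σ j t) (hv : Γ.σ i s ∉ Γ.vertexSet) : i = j :=
  Γ.interiors_disjoint i j s (mem_Ioo_of_notMem_vertexSet hs hv) t
    (mem_Ioo_of_notMem_vertexSet ht (h ▸ hv)) h

lemma HasGDerivAt.unique {γ : ℝ → Γ.G} {t v w : ℝ} (hv : Γ.HasGDerivAt γ t v)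
    (hw : Γ.HasGDerivAt γ t w) : v = w := by
  rcases hv with ⟨hm, rfl, -⟩ | ⟨hm, i, f, hf, hfI, hfd⟩
  · rcases hw with ⟨-, rfl, -⟩ | ⟨hm', -⟩
    · rfl
    · exact absurd hm hm'
  · rcases hw with ⟨hm', -⟩ | ⟨-, j, g, hg, hgI, hgd⟩
    · exact absurd hm' hm
    · obtain rfl : i = j := edge_unique hfI.self_of_nhds hgI.self_of_nhds
        (hf.self_of_nhds.trans hg.self_of_nhds.symm) (hf.self_of_nhds ▸ hm)
      have hfg : f =ᶠ[nhds t] g := by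
        filter_upwards [hf, hfI, hg, hgI] with s h1 h2 h3 h4
        exact Γ.σ_inj i h2 h4 (h1.trans h3.symm)
      exact hfd.unique (hgd.congr_of_eventuallyEq hfg)

lemma HasGDerivAt.gderiv_eq {γ : ℝ → Γ.G} {t v : ℝ} (hv : Γ.HasGDerivAt γ t v) :
    Γ.gderiv γ t = v := by
  have h : ∃ v, Γ.HasGDerivAt γ t v := ⟨v, hv⟩
  rw [gderiv, dif_pos h]
  exact h.choose_spec.unique hv

lemma gderiv_eq_zero_of_not_exists {γ : ℝ → Γ.G} {t : ℝ}
    (h : ¬ ∃ v, Γ.HasGDerivAt γ t v) : Γ.gderiv γ t = 0 := by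
  rw [gderiv, dif_neg h]

lemma gderiv_eq_zero_of_mem_vertexSet {γ : ℝ → Γ.G} {t : ℝ} (ht : γ t ∈ Γ.vertexSet) :
    Γ.gderiv γ t = 0 := by
  by_cases h : ∃ v, Γ.HasGDerivAt γ t v
  · obtain ⟨v, hv⟩ := h
    rw [hv.gderiv_eq]
    rcases hv with ⟨-, h0, -⟩ | ⟨hm, -⟩
    · exact h0
    · exact absurd ht hm
  · exact gderiv_eq_zero_of_not_exists h

lemma HasGDerivAt.comp_affine {γ : ℝ → Γ.G} {s r τ v : ℝ} (hr : 0 < r)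
    (h : Γ.HasGDerivAt γ (s + r * τ) v) :
    Γ.HasGDerivAt (fun x => γ (s + r * x)) τ (r * v) := by
  have hcont : Tendsto (fun x : ℝ => s + r * x) (nhds τ) (nhds (s + r * τ)) :=
    Continuous.tendsto (by fun_prop) τ
  rcases h with ⟨hm, rfl, hd⟩ | ⟨hm, j, f, hf, hfI, hfd⟩
  · refine Or.inl ⟨hm, mul_zero r, fun ε hε => ?_⟩
    obtain ⟨δ, hδ, hb⟩ := hd (ε / r) (div_pos hε hr)
    have key : ∀ x : ℝ, |s + r * x - (s + r * τ)| = r * |x - τ| := fun x => by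
      rw [show s + r * x - (s + r * τ) = r * (x - τ) by ring, abs_mul, abs_of_pos hr]
    refine ⟨δ / r, div_pos hδ hr, fun x hx => ?_⟩
    have h1 := hb (s + r * x) (by rw [key]; rwa [lt_div_iff₀' hr] at hx)
    rw [key] at h1
    calc _ ≤ ε / r * (r * |x - τ|) := h1
      _ = ε * |x - τ| := by field_simp
  · refine Or.inr ⟨hm, j, fun x => f (s + r * x), hcont.eventually hf, hcont.eventually hfI, ?_⟩
    have hd : HasDerivAt (fun x : ℝ => s + r * x) r τ := by
      simpa using ((hasDerivAt_id τ).const_mul r).const_add s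
    simpa [mul_comm] using! HasDerivAt.comp τ hfd hd

/-- Edgewise velocities scale under affine reparametrization, also at times where the edgewise
derivative does not exist, since both sides then take the junk value `0`. -/
lemma gderiv_comp_affine (γ : ℝ → Γ.G) {s r : ℝ} (τ : ℝ) (hr : 0 < r) :
    Γ.gderiv (fun x => γ (s + r * x)) τ = r * Γ.gderiv γ (s + r * τ) := by
  by_cases h : ∃ v, Γ.HasGDerivAt γ (s + r * τ) v
  · obtain ⟨v, hv⟩ := h
    rw [hv.gderiv_eq, (hv.comp_affine hr).gderiv_eq]
  · rw [gderiv_eq_zero_of_not_exists h, mul_zero]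
    refine gderiv_eq_zero_of_not_exists ?_
    rintro ⟨v, hv⟩
    apply h
    refine ⟨r⁻¹ * v, ?_⟩
    have e : -(r⁻¹ * s) + r⁻¹ * (s + r * τ) = τ := by field_simp; ring
    have h2 := HasGDerivAt.comp_affine (γ := fun x => γ (s + r * x)) (s := -(r⁻¹ * s)) (r := r⁻¹)
      (τ := s + r * τ) (v := v) (inv_pos.2 hr) (by rwa [e])
    have e2 : (fun x => γ (s + r * (-(r⁻¹ * s) + r⁻¹ * x))) = γ := by
      funext x
      congr 1
      field_simp
      ring
    rwa [e2] at h2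

/-- The open cell of the edge `j`: the points that are neither vertices nor on another edge. -/
def edgeCell (Γ : MetricGraph) (j : Γ.E) : Set Γ.G :=
  (Γ.vertexSet ∪ ⋃ i ∈ {i | i ≠ j}, Γ.σ i '' Icc 0 (Γ.len i))ᶜ

/-- The arc length coordinate on the edge `j` (meaningful on that edge only). -/
noncomputable def coord (Γ : MetricGraph) (j : Γ.E) : Γ.G → ℝ :=
  Function.invFunOn (Γ.σ j) (Icc 0 (Γ.len j))

lemma isOpen_edgeCell (j : Γ.E) : IsOpen (Γ.edgeCell j) := by
  rw [edgeCell, isOpen_compl_iff]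
  refine finite_vertexSet.isClosed.union (Set.Finite.isClosed_biUnion (toFinite _) fun i _ => ?_)
  exact (isCompact_Icc.image_of_continuousOn (continuousOn_edge i)).isClosed

lemma edgeCell_edge_eq {j i : Γ.E} {s : ℝ} (hs : s ∈ Icc 0 (Γ.len i))
    (h : Γ.σ i s ∈ Γ.edgeCell j) : i = j := by
  by_contra hne
  exact h (Or.inr (mem_biUnion hne ⟨s, hs, rfl⟩))

lemma notMem_vertexSet_of_mem_edgeCell {j : Γ.E} {x : Γ.G} (h : x ∈ Γ.edgeCell j) :
    x ∉ Γ.vertexSet := fun hx => h (Or.inl hx)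

lemma exists_mem_edgeCell {x : Γ.G} (h : x ∉ Γ.vertexSet) : ∃ j, x ∈ Γ.edgeCell j := by
  obtain ⟨j, s, hs, rfl⟩ := Γ.cover x
  refine ⟨j, ?_⟩
  rintro (hx | hx)
  · exact h hx
  · simp only [mem_iUnion] at hx
    obtain ⟨i, hi, t, ht, hit⟩ := hx
    exact hi (edge_unique hs ht hit.symm h).symm

lemma edgeCell_subset_image (j : Γ.E) : Γ.edgeCell j ⊆ Γ.σ j '' Icc 0 (Γ.len j) := by
  intro x hx
  obtain ⟨i, s, hs, rfl⟩ := Γ.cover x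
  obtain rfl := edgeCell_edge_eq hs hx
  exact ⟨s, hs, rfl⟩

lemma coord_edge {j : Γ.E} {s : ℝ} (hs : s ∈ Icc 0 (Γ.len j)) : Γ.coord j (Γ.σ j s) = s :=
  (Γ.σ_inj j).leftInvOn_invFunOn hs

lemma coord_mem {j : Γ.E} {x : Γ.G} (hx : x ∈ Γ.σ j '' Icc 0 (Γ.len j)) :
    Γ.coord j x ∈ Icc 0 (Γ.len j) := by
  obtain ⟨s, hs, rfl⟩ := hx
  rwa [coord_edge hs]

lemma edge_coord {j : Γ.E} {x : Γ.G} (hx : x ∈ Γ.σ j '' Icc 0 (Γ.len j)) :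
    Γ.σ j (Γ.coord j x) = x := by
  obtain ⟨s, hs, rfl⟩ := hx
  rw [coord_edge hs]

lemma continuousOn_coord (j : Γ.E) :
    ContinuousOn (Γ.coord j) (Γ.σ j '' Icc 0 (Γ.len j)) := by
  rw [continuousOn_iff_isClosed]
  intro t ht
  refine ⟨Γ.σ j '' (Icc 0 (Γ.len j) ∩ t), ?_, ?_⟩
  · exact ((isCompact_Icc.inter_right ht).image_of_continuousOn
      ((continuousOn_edge j).mono inter_subset_left)).isClosed
  · ext x
    constructor
    · rintro ⟨h1, h2⟩
      exact ⟨⟨Γ.coord j x, ⟨coord_mem h2, h1⟩, edge_coord h2⟩, h2⟩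
    · rintro ⟨⟨s, ⟨hs, hst⟩, rfl⟩, h2⟩
      exact ⟨by rwa [mem_preimage, coord_edge hs], h2⟩

lemma gderiv_eq_deriv_coord {γ : ℝ → Γ.G} {t : ℝ} {j : Γ.E}
    (h : ∀ᶠ s in nhds t, γ s ∈ Γ.edgeCell j) :
    Γ.gderiv γ t = deriv (fun s => Γ.coord j (γ s)) t := by
  have ht := h.self_of_nhds
  by_cases hd : DifferentiableAt ℝ (fun s => Γ.coord j (γ s)) t
  · refine HasGDerivAt.gderiv_eq (Or.inr ⟨notMem_vertexSet_of_mem_edgeCell ht, j, _, ?_, ?_,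
      hd.hasDerivAt⟩)
    · filter_upwards [h] with s hs using edge_coord (edgeCell_subset_image j hs)
    · filter_upwards [h] with s hs using coord_mem (edgeCell_subset_image j hs)
  · rw [deriv_zero_of_not_differentiableAt hd]
    refine gderiv_eq_zero_of_not_exists ?_
    rintro ⟨v, hv⟩
    rcases hv with ⟨hm, -⟩ | ⟨-, i, f, hf, hfI, hfd⟩
    · exact notMem_vertexSet_of_mem_edgeCell ht hm
    · obtain rfl : i = j := edgeCell_edge_eq hfI.self_of_nhds (hf.self_of_nhds ▸ ht)
      refine hd (hfd.congr_of_eventuallyEq ?_).differentiableAt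
      filter_upwards [hf, hfI] with s h1 h2
      rw [← h1, coord_edge h2]

lemma AbsContOn.continuousOn {a b : ℝ} {γ : ℝ → Γ.G} (h : Γ.AbsContOn a b γ) :
    ContinuousOn γ (Icc a b) := by
  rw [Metric.continuousOn_iff]
  intro x hx ε hε
  obtain ⟨δ, hδ, hb⟩ := h ε hε
  refine ⟨δ, hδ, fun y hy hxy => ?_⟩
  have h1 := hb 1 (fun _ => min x y) (fun _ => max x y)
    (fun _ => ⟨⟨le_min hx.1 hy.1, (min_le_left _ _).trans hx.2⟩,
      ⟨hx.1.trans (le_max_left _ _), max_le hx.2 hy.2⟩, min_le_max⟩)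
    (fun i _ k _ hik => absurd (Subsingleton.elim i k) hik)
    (by simpa [max_sub_min_eq_abs, Real.dist_eq] using hxy)
  rcases le_total x y with hle | hle
  · simpa [hle, dist_comm] using h1
  · simpa [hle] using h1

lemma AbsContOn.comp_affine {a b s t r : ℝ} {γ : ℝ → Γ.G} (h : Γ.AbsContOn a b γ) (hr : 0 < r)
    (hs : a ≤ s) (ht : t ≤ b) :
    Γ.AbsContOn 0 ((t - s) / r) (fun x => γ (s + r * x)) := by
  intro ε hε
  obtain ⟨δ, hδ, hb⟩ := h ε hε
  refine ⟨δ / r, div_pos hδ hr, fun n c d hcd hdisj hsum => ?_⟩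
  have hmem : ∀ x ∈ Icc (0:ℝ) ((t - s) / r), s + r * x ∈ Icc a b := by
    intro x hx
    have h1 := mul_nonneg hr.le hx.1
    have h2 := (le_div_iff₀' hr).1 hx.2
    constructor <;> linarith
  refine hb n (fun i => s + r * c i) (fun i => s + r * d i) (fun i => ?_) ?_ ?_
  · obtain ⟨h1, h2, h3⟩ := hcd i
    exact ⟨hmem _ h1, hmem _ h2, by nlinarith⟩
  · intro i hi k hk hik
    have h1 := hdisj hi hk hik
    rw [Function.onFun, Set.disjoint_left] at h1 ⊢
    intro x hx hx'
    refine @h1 ((x - s) / r) ?_ ?_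
    · constructor
      · rw [lt_div_iff₀' hr]; linarith [hx.1]
      · rw [div_lt_iff₀' hr]; linarith [hx.2]
    · constructor
      · rw [lt_div_iff₀' hr]; linarith [hx'.1]
      · rw [div_lt_iff₀' hr]; linarith [hx'.2]
  · have : ∑ i, (s + r * d i - (s + r * c i)) = r * ∑ i, (d i - c i) := by
      rw [Finset.mul_sum]
      exact Finset.sum_congr rfl fun i _ => by ring
    rw [this]
    rwa [lt_div_iff₀' hr] at hsum

end MetricGraph

/-! ### Uniform bounds on the Lagrangian -/

/-- A jointly continuous function on a compact interval times `ℝ` that is convex and coercive in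
the second variable is bounded below: convexity turns coercivity at one point into coercivity
with a common radius at all nearby points. -/
lemma exists_lower_bound_of_convex_coercive {ℓ : ℝ} {f : ℝ → ℝ → ℝ}
    (hcont : ContinuousOn (fun p : ℝ × ℝ => f p.1 p.2) (Icc 0 ℓ ×ˢ univ))
    (hconv : ∀ x ∈ Icc 0 ℓ, ConvexOn ℝ univ (f x))
    (hcoer : ∀ x ∈ Icc 0 ℓ, ∃ D, ∀ v, |v| - D ≤ f x v) :
    ∃ m, ∀ x ∈ Icc 0 ℓ, ∀ v, m ≤ f x v := by
  have hslice : ∀ v, ContinuousOn (fun x => f x v) (Icc 0 ℓ) := fun v =>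
    hcont.comp (f := fun x : ℝ => (x, v)) (by fun_prop) (fun x hx => ⟨hx, mem_univ _⟩)
  have hloc : ∀ x ∈ Icc 0 ℓ, ∃ t ∈ nhdsWithin x (Icc 0 ℓ), ∃ m, ∀ y ∈ t, y ∈ Icc 0 ℓ →
      ∀ v, m ≤ f y v := by
    intro x hx
    obtain ⟨D, hD⟩ := hcoer x hx
    obtain ⟨R, hR0, hR⟩ : ∃ R : ℝ, 0 < R ∧ f x 0 < R - D :=
      ⟨|f x 0 + D| + 1, by positivity, by linarith [le_abs_self (f x 0 + D)]⟩
    have h1 : f x 0 < f x R := by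
      have := hD R
      rw [abs_of_pos hR0] at this
      linarith
    have h2 : f x 0 < f x (-R) := by
      have := hD (-R)
      rw [abs_neg, abs_of_pos hR0] at this
      linarith
    have e1 : ∀ᶠ y in nhdsWithin x (Icc 0 ℓ), f y 0 < f y R :=
      ((hslice 0) x hx).eventually_lt ((hslice R) x hx) h1
    have e2 : ∀ᶠ y in nhdsWithin x (Icc 0 ℓ), f y 0 < f y (-R) :=
      ((hslice 0) x hx).eventually_lt ((hslice (-R)) x hx) h2
    obtain ⟨m, hm⟩ := ((isCompact_Icc (a := (0:ℝ)) (b := ℓ)).prod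
      (isCompact_Icc (a := -R) (b := R))).bddBelow_image
        (hcont.mono (prod_mono_right (subset_univ _)))
    have hm' : ∀ y ∈ Icc 0 ℓ, ∀ v ∈ Icc (-R) R, m ≤ f y v := fun y hy v hv =>
      hm ⟨(y, v), ⟨hy, hv⟩, rfl⟩
    refine ⟨_, e1.and e2, m, ?_⟩
    rintro y ⟨hy1, hy2⟩ hy v
    by_cases hv : v ∈ Icc (-R) R
    · exact hm' y hy v hv
    · have h0 : m ≤ f y 0 := hm' y hy 0 ⟨by linarith, hR0.le⟩
      refine h0.trans ?_
      by_contra hlt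
      push Not at hlt
      -- `±R` lies between `0` and `v`, so convexity bounds `f y (±R)` by `f y 0`.
      rcases le_total v 0 with hv0 | hv0
      · have hvR : v ≤ -R := by
          by_contra h
          push Not at h
          exact hv ⟨h.le, by linarith⟩
        have := (hconv y hy).le_max_of_mem_Icc (mem_univ v) (mem_univ 0)
          (z := -R) ⟨hvR, by linarith⟩
        rw [max_eq_right hlt.le] at this
        linarith
      · have hvR : R ≤ v := by
          by_contra h
          push Not at h
          exact hv ⟨by linarith, h.le⟩
        have := (hconv y hy).le_max_of_mem_Icc (mem_univ 0) (mem_univ v)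
          (z := R) ⟨hR0.le, hvR⟩
        rw [max_eq_left hlt.le] at this
        linarith
  refine (isCompact_Icc (a := (0:ℝ)) (b := ℓ)).induction_on
    (p := fun s => ∃ m, ∀ y ∈ s, y ∈ Icc 0 ℓ → ∀ v, m ≤ f y v) ⟨0, by simp⟩ ?_ ?_ hloc |>.imp
      fun m hm x hx => hm x hx hx
  · rintro s t hst ⟨m, hm⟩
    exact ⟨m, fun y hy => hm y (hst hy)⟩
  · rintro s t ⟨m, hm⟩ ⟨m', hm'⟩
    refine ⟨min m m', ?_⟩
    rintro y (hy | hy) hyI v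
    · exact (min_le_left _ _).trans (hm y hy hyI v)
    · exact (min_le_right _ _).trans (hm' y hy hyI v)

namespace TonelliLagrangian

variable {Γ : MetricGraph} (Λ : TonelliLagrangian Γ)

/-- `lagOf` and `lagVOf` at `x` are read off at one and the same edge coordinate of `x`. -/
lemma lagOf_spec (x : Γ.G) : ∃ j, ∃ s ∈ Icc 0 (Γ.len j), Γ.σ j s = x ∧
    Λ.lagOf x = Λ.L j s ∧ ∀ v, Λ.lagVOf x v = deriv (Λ.L j s) v :=
  ⟨(Γ.cover x).choose, (Γ.cover x).choose_spec.choose, (Γ.cover x).choose_spec.choose_spec.1,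
    (Γ.cover x).choose_spec.choose_spec.2, rfl, fun _ => rfl⟩

lemma lagOf_of_mem_edgeCell {j : Γ.E} {x : Γ.G} (hx : x ∈ Γ.edgeCell j) :
    Λ.lagOf x = Λ.L j (Γ.coord j x) := by
  obtain ⟨i, s, hs, rfl, h, -⟩ := Λ.lagOf_spec x
  obtain rfl := MetricGraph.edgeCell_edge_eq hs hx
  rw [h, MetricGraph.coord_edge hs]

lemma continuousOn_L (j : Γ.E) :
    ContinuousOn (fun p : ℝ × ℝ => Λ.L j p.1 p.2) (Icc 0 (Γ.len j) ×ˢ univ) :=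
  (Λ.smooth j).continuousOn

lemma differentiable_L (j : Γ.E) {s : ℝ} (hs : s ∈ Icc 0 (Γ.len j)) :
    Differentiable ℝ (Λ.L j s) := by
  have h : ContDiffOn ℝ 2 (fun v => Λ.L j s v) univ :=
    (Λ.smooth j).comp (f := fun v : ℝ => (s, v)) (by fun_prop) (fun v _ => ⟨hs, mem_univ _⟩)
  exact (contDiffOn_univ.1 h).differentiable (by norm_num)

lemma hasDerivAt_lagOf (x : Γ.G) (v : ℝ) : HasDerivAt (Λ.lagOf x) (Λ.lagVOf x v) v := by
  obtain ⟨j, s, hs, -, h, h'⟩ := Λ.lagOf_spec x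
  rw [h, h']
  exact (Λ.differentiable_L j hs v).hasDerivAt

lemma convexOn_lagOf (x : Γ.G) : ConvexOn ℝ univ (Λ.lagOf x) := by
  obtain ⟨j, s, hs, -, h, -⟩ := Λ.lagOf_spec x
  rw [h]
  exact (Λ.strictconv j s hs).convexOn

/-- Superlinearity is uniform over the graph. -/
lemma exists_uniform_superlinear (C : ℝ) : ∃ D, 0 ≤ D ∧ ∀ x v, C * |v| - D ≤ Λ.lagOf x v := by
  have hside : ∀ κ : ℝ, ∀ j, ∃ m, ∀ s ∈ Icc 0 (Γ.len j), ∀ v, m ≤ Λ.L j s v + κ * v := by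
    intro κ j
    refine exists_lower_bound_of_convex_coercive (f := fun s v => Λ.L j s v + κ * v)
      ((Λ.continuousOn_L j).add (by fun_prop)) (fun s hs => ?_) (fun s hs => ?_)
    · refine (Λ.strictconv j s hs).convexOn.add ?_
      exact (LinearMap.mul ℝ ℝ κ).convexOn convex_univ
    · obtain ⟨D, hD⟩ := Λ.superlinear j s hs (|κ| + 1)
      refine ⟨D, fun v => ?_⟩
      have h1 := hD v
      have h2 : -(|κ| * |v|) ≤ κ * v := by
        rw [← abs_mul]
        exact neg_abs_le _
      change _ ≤ Λ.L j s v + κ * v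
      linarith
  choose m hm using hside C
  choose m' hm' using hside (-C)
  refine ⟨∑ j, (|m j| + |m' j|), Finset.sum_nonneg fun j _ => by positivity, fun x v => ?_⟩
  obtain ⟨j, s, hs, -, h, -⟩ := Λ.lagOf_spec x
  rw [h]
  have hsum : |m j| + |m' j| ≤ ∑ j, (|m j| + |m' j|) :=
    Finset.single_le_sum (f := fun j => |m j| + |m' j|) (fun j _ => by positivity)
      (Finset.mem_univ j)
  have h1 := hm j s hs v
  have h2 := hm' j s hs v
  have h3 := neg_abs_le (m j)
  have h4 := neg_abs_le (m' j)
  have h5 := abs_nonneg (m j)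
  have h6 := abs_nonneg (m' j)
  rcases abs_cases v with ⟨hv, -⟩ | ⟨hv, -⟩ <;> rw [hv] <;> linarith

lemma exists_bound (R : ℝ) : ∃ M, 0 ≤ M ∧ ∀ x v, |v| ≤ R → |Λ.lagOf x v| ≤ M := by
  have hj : ∀ j, ∃ M, ∀ s ∈ Icc 0 (Γ.len j), ∀ v, |v| ≤ R → |Λ.L j s v| ≤ M := by
    intro j
    obtain ⟨M, hM⟩ := ((isCompact_Icc (a := (0:ℝ)) (b := Γ.len j)).prod
      (isCompact_Icc (a := -R) (b := R))).exists_bound_of_continuousOn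
        ((Λ.continuousOn_L j).mono (prod_mono_right (subset_univ _)))
    exact ⟨M, fun s hs v hv => hM (s, v) ⟨hs, abs_le.1 hv⟩⟩
  choose M hM using hj
  refine ⟨∑ j, |M j|, Finset.sum_nonneg fun j _ => abs_nonneg _, fun x v hv => ?_⟩
  obtain ⟨j, s, hs, -, h, -⟩ := Λ.lagOf_spec x
  rw [h]
  exact ((hM j s hs v hv).trans (le_abs_self _)).trans
    (Finset.single_le_sum (f := fun j => |M j|) (fun j _ => abs_nonneg _) (Finset.mem_univ j))

/-! ### Measurability of the action integrand -/

lemma aestronglyMeasurable_lagOf {a b : ℝ} {η : ℝ → Γ.G} (hη : ContinuousOn η (Icc a b))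
    (r : ℝ) : AEStronglyMeasurable (fun t => Λ.lagOf (η t) (r * Γ.gderiv η t))
      (volume.restrict (Icc a b)) := by
  rw [← Measure.restrict_congr_set (Ioo_ae_eq_Icc (a := a) (b := b))]
  have hcover : Ioo a b ⊆ (⋃ j : Γ.E, Ioo a b ∩ η ⁻¹' Γ.edgeCell j) ∪
      ⋃ e : Γ.vertexSet, Ioo a b ∩ (Icc a b ∩ η ⁻¹' {e.1}) := by
    intro t ht
    by_cases hv : η t ∈ Γ.vertexSet
    · exact Or.inr (mem_iUnion.2 ⟨⟨η t, hv⟩, ht, Ioo_subset_Icc_self ht, rfl⟩)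
    · obtain ⟨j, hj⟩ := MetricGraph.exists_mem_edgeCell hv
      exact Or.inl (mem_iUnion.2 ⟨j, ht, hj⟩)
  refine AEStronglyMeasurable.mono_set hcover ?_
  have : Countable Γ.vertexSet := MetricGraph.finite_vertexSet.countable.to_subtype
  rw [aestronglyMeasurable_union_iff, aestronglyMeasurable_iUnion_iff,
    aestronglyMeasurable_iUnion_iff]
  constructor
  · intro j
    have hηo : ContinuousOn η (Ioo a b) := hη.mono Ioo_subset_Icc_self
    have hopen : IsOpen (Ioo a b ∩ η ⁻¹' Γ.edgeCell j) :=
      hηo.isOpen_inter_preimage isOpen_Ioo (MetricGraph.isOpen_edgeCell j)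
    have hcoord : ContinuousOn (fun t => Γ.coord j (η t)) (Ioo a b ∩ η ⁻¹' Γ.edgeCell j) :=
      (MetricGraph.continuousOn_coord j).comp (hηo.mono inter_subset_left)
        (fun t ht => MetricGraph.edgeCell_subset_image j ht.2)
    have hproj : Continuous (fun p : ℝ × ℝ =>
        Λ.L j (projIcc 0 (Γ.len j) (Γ.len_pos j).le p.1) p.2) :=
      (Λ.continuousOn_L j).comp_continuous
        (f := fun p : ℝ × ℝ => ((projIcc 0 (Γ.len j) (Γ.len_pos j).le p.1 : ℝ), p.2))
        (by fun_prop) (fun p => ⟨(projIcc 0 (Γ.len j) (Γ.len_pos j).le p.1).2, mem_univ _⟩)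
    have hmeas : AEStronglyMeasurable (fun t => ((Γ.coord j (η t)),
        r * deriv (fun s => Γ.coord j (η s)) t))
        (volume.restrict (Ioo a b ∩ η ⁻¹' Γ.edgeCell j)) :=
      (hcoord.aestronglyMeasurable hopen.measurableSet).prodMk
        ((measurable_deriv _).const_mul r).aestronglyMeasurable
    refine (hproj.comp_aestronglyMeasurable hmeas).congr ?_
    refine (ae_restrict_iff' hopen.measurableSet).2 (Eventually.of_forall fun t ht => ?_)
    have hnear : ∀ᶠ s in nhds t, η s ∈ Γ.edgeCell j :=
      mem_of_superset (hopen.mem_nhds ht) fun s hs => hs.2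
    change Λ.L j (projIcc 0 (Γ.len j) (Γ.len_pos j).le (Γ.coord j (η t)))
      (r * deriv (fun s => Γ.coord j (η s)) t) = Λ.lagOf (η t) (r * Γ.gderiv η t)
    rw [Λ.lagOf_of_mem_edgeCell ht.2, MetricGraph.gderiv_eq_deriv_coord hnear,
      projIcc_of_mem _ (MetricGraph.coord_mem (MetricGraph.edgeCell_subset_image j ht.2))]
  · intro e
    have hms : MeasurableSet (Ioo a b ∩ (Icc a b ∩ η ⁻¹' {e.1})) :=
      measurableSet_Ioo.inter
        (hη.preimage_isClosed_of_isClosed isClosed_Icc isClosed_singleton).measurableSet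
    refine (aestronglyMeasurable_const (b := Λ.lagOf e.1 0)).congr ?_
    refine (ae_restrict_iff' hms).2 (Eventually.of_forall fun t ht => ?_)
    have he : η t = e.1 := ht.2.2
    change Λ.lagOf e.1 0 = Λ.lagOf (η t) (r * Γ.gderiv η t)
    rw [MetricGraph.gderiv_eq_zero_of_mem_vertexSet (he ▸ e.2), mul_zero, he]

/-! ### The Mañé potential as a lower bound for actions -/

lemma exists_action_lower_bound : ∃ D, 0 ≤ D ∧ ∀ T : ℝ, 0 < T → ∀ γ : ℝ → Γ.G,
    Λ.ActionIntegrableOn 0 T γ → -(D * T) ≤ Λ.action 0 T γ := by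
  obtain ⟨D, hD0, hD⟩ := Λ.exists_uniform_superlinear 0
  refine ⟨D, hD0, fun T hT γ hγ => ?_⟩
  have hint : IntervalIntegrable (fun t => Λ.lagOf (γ t) (Γ.gderiv γ t)) volume 0 T :=
    (intervalIntegrable_iff_integrableOn_Icc_of_le hT.le).2 hγ
  have h := intervalIntegral.integral_mono_on hT.le
    (intervalIntegrable_const (c := -D)) hint (fun t _ => by
      have := hD (γ t) (Γ.gderiv γ t)
      linarith)
  rw [intervalIntegral.integral_const, smul_eq_mul] at h
  change _ ≤ ∫ t in (0:ℝ)..T, Λ.lagOf (γ t) (Γ.gderiv γ t)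
  linarith

lemma mane_le_action {c : ℝ} (hc : Λ.IsCriticalValue c) {T : ℝ} (hT : 0 < T) {γ : ℝ → Γ.G}
    (hac : Γ.AbsContOn 0 T γ) (hint : Λ.ActionIntegrableOn 0 T γ) :
    Λ.mane c (γ 0) (γ T) ≤ Λ.action 0 T γ + c * T := by
  obtain ⟨D, hD0, hD⟩ := Λ.exists_action_lower_bound
  have hht : ∀ t : ℝ, 0 < t → ∀ x y, -(D * t) ≤ Λ.ht t x y := by
    intro t ht x y
    have : -(D * t) ≤ 0 := by nlinarith
    rw [TonelliLagrangian.ht]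
    refine Real.le_sInf ?_ this
    rintro _ ⟨γ', -, -, -, hi, rfl⟩
    exact hD t ht γ' hi
  have hle : Λ.ht T (γ 0) (γ T) ≤ Λ.action 0 T γ := by
    refine csInf_le ⟨-(D * T), ?_⟩ ⟨γ, hac, rfl, rfl, hint, rfl⟩
    rintro _ ⟨γ', -, -, -, hi, rfl⟩
    exact hD T hT γ' hi
  have hbdd : BddBelow {r | ∃ t : ℝ, 0 < t ∧ r = Λ.ht t (γ 0) (γ T) + c * t} := by
    obtain ⟨r, hr⟩ := hc.2.2 (γ 0) (γ T)
    have hlt : ((r - 1 : ℝ) : EReal) < Filter.liminf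
        (fun t : ℝ => ((Λ.ht t (γ 0) (γ T) + c * t : ℝ) : EReal)) Filter.atTop := by
      rw [hr]
      exact_mod_cast sub_one_lt r
    obtain ⟨T₀, hT₀⟩ := eventually_atTop.1 (eventually_lt_of_lt_liminf hlt)
    refine ⟨min (r - 1) (-((D + |c|) * |T₀|)), ?_⟩
    rintro _ ⟨t, ht, rfl⟩
    rcases le_total T₀ t with h | h
    · have h1 : r - 1 < Λ.ht t (γ 0) (γ T) + c * t := by exact_mod_cast hT₀ t h
      exact (min_le_left _ _).trans h1.le
    · refine (min_le_right _ _).trans ?_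
      have h1 := hht t ht (γ 0) (γ T)
      have h2 : (D + |c|) * t ≤ (D + |c|) * |T₀| :=
        mul_le_mul_of_nonneg_left (h.trans (le_abs_self _)) (by positivity)
      have h3 : -|c| * t ≤ c * t := mul_le_mul_of_nonneg_right (neg_abs_le c) ht.le
      linarith
  have h1 : Λ.mane c (γ 0) (γ T) ≤ Λ.ht T (γ 0) (γ T) + c * T := csInf_le hbdd ⟨T, hT, rfl⟩
  linarith

/-! ### Comparing a semi-static curve with its affine reparametrizations -/

/-- Traversing a piece of a semi-static curve at `r` times its speed does not lower the
action corrected by `c`. -/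
lemma SemiStatic.integral_le {c : ℝ} (hc : Λ.IsCriticalValue c) {a b : ℝ} {η : ℝ → Γ.G}
    (hac : Γ.AbsContOn a b η) (hss : Λ.SemiStatic c (Icc a b) η) {r : ℝ} (hr : 0 < r)
    (hint : IntegrableOn (fun t => Λ.lagOf (η t) (r * Γ.gderiv η t)) (Icc a b))
    {s t : ℝ} (hs : a ≤ s) (hst : s < t) (ht : t ≤ b) :
    r * ((∫ u in s..t, Λ.lagOf (η u) (Γ.gderiv η u)) + c * (t - s)) ≤
      (∫ u in s..t, Λ.lagOf (η u) (r * Γ.gderiv η u)) + c * (t - s) := by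
  set F : ℝ → ℝ := fun u => Λ.lagOf (η u) (r * Γ.gderiv η u) with hF
  have hT : 0 < (t - s) / r := div_pos (sub_pos.2 hst) hr
  have hint' : IntervalIntegrable F volume s t :=
    (intervalIntegrable_iff_integrableOn_Icc_of_le hst.le).2
      (hint.mono_set (Icc_subset_Icc hs ht))
  have hfun : (fun τ => Λ.lagOf (η (s + r * τ)) (Γ.gderiv (fun x => η (s + r * x)) τ)) =
      fun τ => F (s + r * τ) := by
    funext τ
    rw [MetricGraph.gderiv_comp_affine η τ hr]
  have hact : Λ.ActionIntegrableOn 0 ((t - s) / r) (fun x => η (s + r * x)) := by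
    have h1 := (hint'.comp_add_left s).comp_mul_left (c := r)
    rw [sub_self, zero_div, intervalIntegrable_iff_integrableOn_Icc_of_le hT.le] at h1
    rw [ActionIntegrableOn, hfun]
    exact h1
  have h1 := Λ.mane_le_action hc hT (hac.comp_affine hr hs ht) hact
  have hend : s + r * ((t - s) / r) = t := by field_simp; ring
  have hval : Λ.action 0 ((t - s) / r) (fun x => η (s + r * x)) = r⁻¹ * ∫ u in s..t, F u := by
    rw [action, hfun, intervalIntegral.integral_comp_add_mul F hr.ne', hend, mul_zero, add_zero,
      smul_eq_mul]
  have h2 := (hss s ⟨hs, hst.le.trans ht⟩ t ⟨hs.trans hst.le, ht⟩ hst.le).2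
  simp only [hend, mul_zero, add_zero] at h1
  rw [hval, h2, action] at h1
  have h3 := mul_le_mul_of_nonneg_left h1 hr.le
  have h4 : r * (r⁻¹ * (∫ u in s..t, F u) + c * ((t - s) / r)) =
      (∫ u in s..t, F u) + c * (t - s) := by field_simp
  linarith

/-- The pointwise form of `SemiStatic.integral_le`, by Lebesgue differentiation. -/
lemma SemiStatic.ae_le {c : ℝ} (hc : Λ.IsCriticalValue c) {a b : ℝ} (hab : a ≤ b) {η : ℝ → Γ.G}
    (hac : Γ.AbsContOn a b η) (hss : Λ.SemiStatic c (Icc a b) η) {r : ℝ} (hr : 0 < r)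
    (hint : IntegrableOn (fun t => Λ.lagOf (η t) (r * Γ.gderiv η t)) (Icc a b)) :
    ∀ᵐ t ∂(volume.restrict (Icc a b)),
      r * (Λ.lagOf (η t) (Γ.gderiv η t) + c) ≤ Λ.lagOf (η t) (r * Γ.gderiv η t) + c := by
  have hint1 := (hss a ⟨le_rfl, hab⟩ b ⟨hab, le_rfl⟩ hab).1
  set F : ℝ → ℝ := fun u => Λ.lagOf (η u) (r * Γ.gderiv η u) with hF
  set F₁ : ℝ → ℝ := fun u => Λ.lagOf (η u) (Γ.gderiv η u) with hF₁
  have hi : ∀ s t, a ≤ s → s < t → t ≤ b → IntervalIntegrable F volume s t := fun s t h1 h2 h3 =>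
    (intervalIntegrable_iff_integrableOn_Icc_of_le h2.le).2 (hint.mono_set (Icc_subset_Icc h1 h3))
  have hi₁ : ∀ s t, a ≤ s → s < t → t ≤ b → IntervalIntegrable F₁ volume s t :=
    fun s t h1 h2 h3 => (intervalIntegrable_iff_integrableOn_Icc_of_le h2.le).2
      (IntegrableOn.mono_set hint1 (Icc_subset_Icc h1 h3))
  rcases hab.eq_or_lt with rfl | hlt
  · simp
  set g : ℝ → ℝ := fun u => (F u + c) - r * (F₁ u + c) with hg
  have hgi : ∀ s t, a ≤ s → s < t → t ≤ b → IntervalIntegrable g volume s t := fun s t h1 h2 h3 =>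
    ((hi s t h1 h2 h3).add intervalIntegrable_const).sub
      (((hi₁ s t h1 h2 h3).add intervalIntegrable_const).const_mul r)
  have hpos : ∀ s t, a ≤ s → s < t → t ≤ b → 0 ≤ ∫ u in s..t, g u := by
    intro s t h1 h2 h3
    have h := SemiStatic.integral_le Λ hc hac hss hr hint h1 h2 h3
    have e : ∫ u in s..t, g u = ((∫ u in s..t, F u) + c * (t - s)) -
        r * ((∫ u in s..t, F₁ u) + c * (t - s)) := by
      rw [intervalIntegral.integral_sub
          ((hi s t h1 h2 h3).add intervalIntegrable_const)
          (((hi₁ s t h1 h2 h3).add intervalIntegrable_const).const_mul r),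
        intervalIntegral.integral_const_mul,
        intervalIntegral.integral_add (hi s t h1 h2 h3) intervalIntegrable_const,
        intervalIntegral.integral_add (hi₁ s t h1 h2 h3) intervalIntegrable_const,
        intervalIntegral.integral_const, smul_eq_mul]
      ring
    rw [e]
    exact sub_nonneg.2 h
  have hmono : MonotoneOn (fun x => ∫ u in a..x, g u) (Icc a b) := by
    intro s hs t ht hst
    rcases hst.eq_or_lt with rfl | hst
    · rfl
    change (∫ u in a..s, g u) ≤ ∫ u in a..t, g u
    have h0 : IntervalIntegrable g volume a s := by
      rcases hs.1.eq_or_lt with rfl | h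
      · exact IntervalIntegrable.refl
      · exact hgi a s le_rfl h hs.2
    rw [← intervalIntegral.integral_add_adjacent_intervals h0 (hgi s t hs.1 hst ht.2)]
    linarith [hpos s t hs.1 hst ht.2]
  rw [← Measure.restrict_congr_set (Ioo_ae_eq_Icc (a := a) (b := b)),
    ae_restrict_iff' measurableSet_Ioo]
  filter_upwards [(hgi a b le_rfl hlt le_rfl).ae_hasDerivAt_integral] with x hx hxI
  rw [uIcc_of_le hab] at hx
  have hd := hx (Ioo_subset_Icc_self hxI) a ⟨le_rfl, hab⟩
  have hw : 0 ≤ g x := by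
    rw [← hd.deriv, ← derivWithin_of_mem_nhds (Icc_mem_nhds hxI.1 hxI.2)]
    exact hmono.derivWithin_nonneg
  exact sub_nonneg.1 hw

end TonelliLagrangian

/-! ### One-sided difference quotients -/

lemma deriv_nonpos_of_nonneg_left {g : ℝ → ℝ} {d : ℝ} (hd : HasDerivAt g d 1) (h1 : g 1 = 0)
    (h : ∀ q : ℚ, 0 < (q : ℝ) → (q : ℝ) < 1 → 0 ≤ g q) : d ≤ 0 := by
  by_contra hpos
  push Not at hpos
  have h2 := (hasDerivAt_iff_tendsto_slope_left_right.1 hd).1.eventually (lt_mem_nhds hpos)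
  obtain ⟨l, hl, hl'⟩ := (mem_nhdsLT_iff_exists_Ioo_subset).1 h2
  obtain ⟨q, hq, hq1⟩ := exists_rat_btwn (max_lt (show l < 1 from hl) one_pos)
  have h3 : 0 < slope g 1 q := hl' ⟨(le_max_left _ _).trans_lt hq, hq1⟩
  rw [slope_def_field, h1, sub_zero] at h3
  have h4 := div_nonpos_of_nonneg_of_nonpos (h q ((le_max_right _ _).trans_lt hq) hq1)
    (sub_nonpos.2 hq1.le)
  linarith

lemma deriv_nonneg_of_nonneg_right {g : ℝ → ℝ} {d : ℝ} (hd : HasDerivAt g d 1) (h1 : g 1 = 0)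
    (h : ∀ q : ℚ, 1 < (q : ℝ) → 0 ≤ g q) : 0 ≤ d := by
  by_contra hneg
  push Not at hneg
  have h2 := (hasDerivAt_iff_tendsto_slope_left_right.1 hd).2.eventually (gt_mem_nhds hneg)
  obtain ⟨l, hl, hl'⟩ := (mem_nhdsGT_iff_exists_Ioo_subset).1 h2
  obtain ⟨q, hq1, hq⟩ := exists_rat_btwn (show (1:ℝ) < l from hl)
  have h3 : slope g 1 q < 0 := hl' ⟨hq1, hq⟩
  rw [slope_def_field, h1, sub_zero] at h3
  have h4 := div_nonneg (h q hq1) (sub_nonneg.2 hq1.le)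
  linarith

/-- semi-static curves have energy `c`. -/
theorem semiStatic_energy
    (Γ : MetricGraph) (Λ : TonelliLagrangian Γ) (c : ℝ) (hc : Λ.IsCriticalValue c)
    (a b : ℝ) (hab : a ≤ b) (η : ℝ → Γ.G) (hac : Γ.AbsContOn a b η)
    (hss : Λ.SemiStatic c (Set.Icc a b) η) :
    ∀ᵐ t ∂(volume.restrict (Set.Icc a b)),
      Λ.lagVOf (η t) (Γ.gderiv η t) * Γ.gderiv η t =
        Λ.lagOf (η t) (Γ.gderiv η t) + c := by
  have hcont := hac.continuousOn
  have hint1 := (hss a ⟨le_rfl, hab⟩ b ⟨hab, le_rfl⟩ hab).1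
  obtain ⟨M₀, hM₀, hbd₀⟩ := Λ.exists_bound 0
  obtain ⟨D₀, hD₀, hlow⟩ := Λ.exists_uniform_superlinear 0
  -- Slowing down keeps the action finite, since `L(x, r v) ≤ r L(x, v) + (1 - r) L(x, 0)`.
  have hslow : ∀ r : ℝ, 0 < r → r < 1 →
      IntegrableOn (fun t => Λ.lagOf (η t) (r * Γ.gderiv η t)) (Icc a b) := by
    intro r hr0 hr1
    have hdom : Integrable (fun t => |Λ.lagOf (η t) (Γ.gderiv η t)| + (M₀ + D₀))
        (volume.restrict (Icc a b)) :=
      (Integrable.abs hint1).add (integrable_const _)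
    refine hdom.mono' (Λ.aestronglyMeasurable_lagOf hcont r) (Eventually.of_forall fun t => ?_)
    have h1 := (Λ.convexOn_lagOf (η t)).2 (mem_univ (Γ.gderiv η t)) (mem_univ 0) hr0.le
      (sub_nonneg.2 hr1.le) (by ring)
    simp only [smul_eq_mul, mul_zero, add_zero] at h1
    have h2 := hlow (η t) (r * Γ.gderiv η t)
    have h3 := (abs_le.1 (hbd₀ (η t) 0 (by simp))).2
    have h4 := le_abs_self (Λ.lagOf (η t) (Γ.gderiv η t))
    have h5 := abs_nonneg (Λ.lagOf (η t) (Γ.gderiv η t))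
    rw [Real.norm_eq_abs, abs_le]
    constructor
    · linarith
    · nlinarith
  have hae1 : ∀ᵐ t ∂(volume.restrict (Icc a b)), ∀ q : ℚ, 0 < (q : ℝ) → (q : ℝ) < 1 →
      q * (Λ.lagOf (η t) (Γ.gderiv η t) + c) ≤ Λ.lagOf (η t) (q * Γ.gderiv η t) + c := by
    refine ae_all_iff.2 fun q => ?_
    by_cases h0 : 0 < (q : ℝ)
    · by_cases h1 : (q : ℝ) < 1
      · filter_upwards [TonelliLagrangian.SemiStatic.ae_le Λ hc hab hac hss h0 (hslow q h0 h1)]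
          with t ht _ _ using ht
      · exact Eventually.of_forall fun t _ h => absurd h h1
    · exact Eventually.of_forall fun t h => absurd h h0
  -- The comparison with the slowdown by `1 / k`, where `k` exceeds `|v|`, bounds the speed `|v|`.
  obtain ⟨M, hM, hbd⟩ := Λ.exists_bound 1
  obtain ⟨D, hD, hsup⟩ := Λ.exists_uniform_superlinear (M + |c| + 1)
  set R : ℝ := D + |c| + 2 * (M + |c|) with hR
  have hspeed : ∀ᵐ t ∂(volume.restrict (Icc a b)), |Γ.gderiv η t| ≤ R := by
    filter_upwards [hae1] with t ht
    set v := Γ.gderiv η t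
    set k : ℕ := ⌊|v|⌋₊ + 2 with hk
    have hk2 : (2:ℝ) ≤ k := by rw [hk]; push_cast; linarith [Nat.cast_nonneg (α := ℝ) ⌊|v|⌋₊]
    have hk0 : (0:ℝ) < k := by linarith
    have hkv : |v| ≤ k := by rw [hk]; push_cast; linarith [Nat.lt_floor_add_one |v|]
    have hkv' : (k:ℝ) ≤ |v| + 2 := by
      rw [hk]; push_cast; linarith [Nat.floor_le (abs_nonneg v)]
    have h1 := ht ((k:ℚ)⁻¹) (by push_cast; positivity)
      (by push_cast; exact inv_lt_one_of_one_lt₀ (by linarith))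
    push_cast at h1
    have h2 : |(k:ℝ)⁻¹ * v| ≤ 1 := by
      rw [abs_mul, abs_of_pos (inv_pos.2 hk0), inv_mul_le_iff₀ hk0]
      linarith
    have h3 := (abs_le.1 (hbd (η t) _ h2)).2
    have h4 : Λ.lagOf (η t) v + c ≤ k * (M + |c|) := by
      rw [inv_mul_le_iff₀ hk0] at h1
      exact h1.trans (mul_le_mul_of_nonneg_left (by linarith [le_abs_self c]) hk0.le)
    have h5 := hsup (η t) v
    have h6 : k * (M + |c|) ≤ (|v| + 2) * (M + |c|) :=
      mul_le_mul_of_nonneg_right hkv' (by positivity)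
    have h7 := neg_abs_le c
    rw [hR]
    linarith
  -- Bounded speed makes every speed-up an admissible competitor as well.
  have hfast : ∀ r : ℝ, 1 < r →
      IntegrableOn (fun t => Λ.lagOf (η t) (r * Γ.gderiv η t)) (Icc a b) := by
    intro r hr
    obtain ⟨M', -, hM'⟩ := Λ.exists_bound (r * R)
    have hdom : Integrable (fun _ : ℝ => M') (volume.restrict (Icc a b)) := integrable_const _
    refine hdom.mono' (Λ.aestronglyMeasurable_lagOf hcont r) ?_
    filter_upwards [hspeed] with t ht
    refine hM' _ _ ?_
    rw [abs_mul, abs_of_pos (by linarith : 0 < r)]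
    exact mul_le_mul_of_nonneg_left ht (by linarith)
  have hae2 : ∀ᵐ t ∂(volume.restrict (Icc a b)), ∀ q : ℚ, 1 < (q : ℝ) →
      q * (Λ.lagOf (η t) (Γ.gderiv η t) + c) ≤ Λ.lagOf (η t) (q * Γ.gderiv η t) + c := by
    refine ae_all_iff.2 fun q => ?_
    by_cases h1 : 1 < (q : ℝ)
    · filter_upwards [TonelliLagrangian.SemiStatic.ae_le Λ hc hab hac hss (by linarith)
        (hfast q h1)] with t ht _ using ht
    · exact Eventually.of_forall fun t h => absurd h h1
  filter_upwards [hae1, hae2] with t ht1 ht2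
  set v := Γ.gderiv η t
  set x := η t
  have hd : HasDerivAt (fun r : ℝ => (Λ.lagOf x (r * v) + c) - r * (Λ.lagOf x v + c))
      (Λ.lagVOf x v * v - (Λ.lagOf x v + c)) 1 := by
    have h1 : HasDerivAt (fun r : ℝ => r * v) v 1 := by
      simpa using (hasDerivAt_id (1:ℝ)).mul_const v
    have h2 : HasDerivAt (Λ.lagOf x) (Λ.lagVOf x v) ((1:ℝ) * v) := by
      rw [one_mul]
      exact Λ.hasDerivAt_lagOf x v
    have h3 : HasDerivAt (fun r : ℝ => Λ.lagOf x (r * v)) (Λ.lagVOf x v * v) 1 :=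
      HasDerivAt.comp (1:ℝ) h2 h1
    have h4 : HasDerivAt (fun r : ℝ => r * (Λ.lagOf x v + c)) (Λ.lagOf x v + c) 1 := by
      simpa using (hasDerivAt_id (1:ℝ)).mul_const (Λ.lagOf x v + c)
    exact (h3.add_const c).sub h4
  have hle := deriv_nonpos_of_nonneg_left hd (by simp)
    (fun q h0 h1 => sub_nonneg.2 (ht1 q h0 h1))
  have hge := deriv_nonneg_of_nonneg_right hd (by simp) (fun q h1 => sub_nonneg.2 (ht2 q h1))
  linarith
end
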